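/- arXiv:1509.00797 — 8 statements merged into one kernel-verified Lean document; each statement's English description precedes it below -/
import Mathlib

section
/- Let F be a finite field with q elements and let W be a Weierstrass curve over F with nonzero discriminant (an elliptic curve). Let N be the number of F-rational points of W, i.e. the number of elements of the group W(F) consisting of the affine points of W together with the point at infinity. Then |N − q − 1| ≤ 2·√q. -/
/-!
Regard rational maps `W → W` as points of `W` over its own function field `K`: the identity is the
generic point `P` and the Frobenius endomorphism is `φ`. The degree of such a map is the height over
`F(X)` of its `x`-coordinate. On the odd maps, whose `x`-coordinate lies in `F(X)`, the height
satisfies the parallelogram law, because `(x(P), x(Q)) ↦ (x(P + Q), x(P - Q))` is given on symmetric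
functions by quadratic forms without common zeros. So it is a nonnegative quadratic form, and the
Cauchy-Schwarz inequality applied to `φ`, of degree `q`, and `P`, of degree `1`, gives
`(deg (φ - P) - q - 1) ^ 2 ≤ 4 * q`.

It remains to see that `deg (φ - P) = N`. The `x`-coordinates of `φ ± P` are fractions with
denominator `(X ^ q - X) ^ 2`, and `(X - x) ^ n`, respectively `(X - x) ^ (2 - n)`, cancels if `n`
rational points of `W` lie above `x`. This bounds the degrees of `φ - P` and `φ + P` by `N` and
`2 * q + 2 - N`; both bounds are attained, since by the parallelogram law the degrees add up to
`2 * q + 2`.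
-/

namespace HasseWeil

open Polynomial WeierstrassCurve

section VecDegree

variable {ι R : Type*} [Fintype ι]

/-- The degree of a vector of polynomials, i.e. the maximum of the degrees of its entries
(`0` for the zero vector). -/
def vecDegree [Semiring R] (v : ι → R[X]) : ℕ :=
  Finset.univ.sup fun i => (v i).natDegree

lemma natDegree_le_vecDegree [Semiring R] (v : ι → R[X]) (i : ι) :
    (v i).natDegree ≤ vecDegree v :=
  Finset.le_sup (f := fun i => (v i).natDegree) (Finset.mem_univ i)

lemma vecDegree_le [Semiring R] {v : ι → R[X]} {d : ℕ} (h : ∀ i, (v i).natDegree ≤ d) :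
    vecDegree v ≤ d :=
  Finset.sup_le fun i _ => h i

lemma coeff_vecDegree_ne_zero [Semiring R] {v : ι → R[X]} (hv : v ≠ 0) :
    (fun i => (v i).coeff (vecDegree v)) ≠ 0 := by
  obtain ⟨j, hj⟩ := Function.ne_iff.1 hv
  obtain ⟨i, -, hi⟩ := Finset.exists_mem_eq_sup Finset.univ ⟨j, Finset.mem_univ j⟩
    fun i => (v i).natDegree
  change vecDegree v = _ at hi
  intro h
  have hvi : v i = 0 := by simpa [hi] using congrFun h i
  have hd : (v j).natDegree = 0 := by
    simpa [hi, hvi] using natDegree_le_vecDegree v j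
  refine hj ?_
  rw [eq_C_of_natDegree_eq_zero hd, Pi.zero_apply, C_eq_zero]
  simpa [hi, hvi] using congrFun h j

lemma vecDegree_eq [Semiring R] {v : ι → R[X]} {d : ℕ} (h : ∀ i, (v i).natDegree ≤ d)
    (hd : (fun i => (v i).coeff d) ≠ 0) : vecDegree v = d := by
  obtain ⟨i, hi⟩ := Function.ne_iff.1 hd
  exact (vecDegree_le h).antisymm ((le_natDegree_of_ne_zero hi).trans (natDegree_le_vecDegree v i))

end VecDegree

section Primitive

lemma exists_eq_smul_primitive {ι R : Type*} [Finite ι] [CommRing R] [IsDomain R]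
    [IsPrincipalIdealRing R] {v : ι → R} (hv : v ≠ 0) :
    ∃ g : R, g ≠ 0 ∧ ∃ f : ι → R, Ideal.span (Set.range f) = ⊤ ∧ v = g • f := by
  cases nonempty_fintype ι
  obtain ⟨g, hg⟩ := IsPrincipalIdealRing.principal (Ideal.span (Set.range v))
  have hdvd (i : ι) : ∃ c, v i = g * c := by
    rw [← dvd_def, ← Ideal.mem_span_singleton, ← Ideal.submodule_span_eq, ← hg]
    exact Ideal.subset_span ⟨i, rfl⟩
  choose f hf using hdvd
  have hvf : v = g • f := funext hf
  have hg0 : g ≠ 0 := by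
    rintro rfl
    exact hv (by rw [hvf, zero_smul])
  refine ⟨g, hg0, f, (Ideal.eq_top_iff_one _).2 ?_, hvf⟩
  have hmem : g ∈ Ideal.span (Set.range v) := hg ▸ Ideal.mem_span_singleton_self (x := g)
  obtain ⟨c, hc⟩ := (Ideal.mem_span_range_iff_exists_fun).1 hmem
  refine (Ideal.mem_span_range_iff_exists_fun).2 ⟨c, mul_left_cancel₀ hg0 ?_⟩
  calc g * ∑ i, c i * f i = ∑ i, c i * v i := by
        rw [Finset.mul_sum]
        exact Finset.sum_congr rfl fun i _ => by rw [hf i]; ring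
    _ = g * 1 := by rw [hc, mul_one]

lemma exists_eq_smul_of_primitive {ι R : Type*} [Finite ι] [CommRing R] {v w : ι → R}
    (hv : Ideal.span (Set.range v) = ⊤) (h : ∀ i j, v i * w j = v j * w i) :
    ∃ g : R, w = g • v := by
  cases nonempty_fintype ι
  obtain ⟨c, hc⟩ := (Ideal.mem_span_range_iff_exists_fun).1 ((Ideal.eq_top_iff_one _).1 hv)
  refine ⟨∑ i, c i * w i, funext fun j => ?_⟩
  calc w j = (∑ i, c i * v i) * w j := by rw [hc, one_mul]
    _ = ∑ i, c i * w i * v j := by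
      rw [Finset.sum_mul]
      exact Finset.sum_congr rfl fun i _ => by rw [mul_assoc, h i j]; ring
    _ = ((∑ i, c i * w i) • v) j := by rw [Pi.smul_apply, smul_eq_mul, Finset.sum_mul]

lemma vecDegree_le_of_primitive {ι R : Type*} [Fintype ι] [CommRing R] [IsDomain R]
    {v w : ι → R[X]} (hv : Ideal.span (Set.range v) = ⊤) (hw : w ≠ 0)
    (h : ∀ i j, v i * w j = v j * w i) : vecDegree v ≤ vecDegree w := by
  obtain ⟨g, rfl⟩ := exists_eq_smul_of_primitive hv h
  have hg : g ≠ 0 := by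
    rintro rfl
    exact hw (zero_smul _ v)
  refine vecDegree_le fun i => ?_
  rcases eq_or_ne (v i) 0 with hi | hi
  · simp [hi]
  · calc (v i).natDegree ≤ (g * v i).natDegree := by
          rw [natDegree_mul hg hi]
          exact Nat.le_add_left _ _
      _ ≤ vecDegree (g • v) := natDegree_le_vecDegree (g • v) i

end Primitive

section SymMul

variable {R : Type*} [CommRing R]

/-- The coefficients of the product of the linear forms with coefficients `p` and `q`, i.e. the
image of the pair `(p, q)` under the symmetrization map `ℙ¹ × ℙ¹ → ℙ²`. -/
def symMul (p q : Fin 2 → R) : Fin 3 → R :=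
  ![p 0 * q 0, p 0 * q 1 + p 1 * q 0, p 1 * q 1]

lemma symMul_smul_smul (a b : R) (p q : Fin 2 → R) :
    symMul (a • p) (b • q) = (a * b) • symMul p q := by
  ext i
  fin_cases i <;> simp [symMul] <;> ring

lemma map_symMul {S : Type*} [CommRing S] (f : R →+* S) (p q : Fin 2 → R) (i : Fin 3) :
    f (symMul p q i) = symMul (fun j => f (p j)) (fun j => f (q j)) i := by
  fin_cases i <;> simp [symMul]

lemma symMul_ne_zero [IsDomain R] {p q : Fin 2 → R} (hp : p ≠ 0) (hq : q ≠ 0) :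
    symMul p q ≠ 0 := by
  intro h
  have h0 : p 0 * q 0 = 0 := congrFun h 0
  have h1 : p 0 * q 1 + p 1 * q 0 = 0 := congrFun h 1
  have h2 : p 1 * q 1 = 0 := congrFun h 2
  simp only [Function.ne_iff, Fin.exists_fin_two, Pi.zero_apply] at hp hq
  rcases mul_eq_zero.1 h0 with h0 | h0 <;> rcases mul_eq_zero.1 h2 with h2 | h2 <;>
    simp_all

lemma primitive_symMul {p q : Fin 2 → R} (hp : Ideal.span (Set.range p) = ⊤)
    (hq : Ideal.span (Set.range q) = ⊤) : Ideal.span (Set.range (symMul p q)) = ⊤ := by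
  set I := Ideal.span (Set.range (symMul p q))
  have h0 : p 0 * q 0 ∈ I := Ideal.subset_span ⟨0, rfl⟩
  have h1 : p 0 * q 1 + p 1 * q 0 ∈ I := Ideal.subset_span ⟨1, rfl⟩
  have h2 : p 1 * q 1 ∈ I := Ideal.subset_span ⟨2, rfl⟩
  have h01 : p 0 * q 1 ∈ I.radical := by
    refine ⟨2, ?_⟩
    have : (p 0 * q 1) ^ 2
        = p 0 * q 1 * (p 0 * q 1 + p 1 * q 0) - p 0 * q 0 * (p 1 * q 1) := by ring
    rw [this]
    exact I.sub_mem (I.mul_mem_left _ h1) (I.mul_mem_left _ h2)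
  have h10 : p 1 * q 0 ∈ I.radical := by
    simpa using I.radical.sub_mem (I.le_radical h1) h01
  rw [← Ideal.radical_eq_top, ← top_le_iff, ← Ideal.top_mul ⊤]
  nth_rw 1 [← hp]
  rw [← hq, Ideal.span_mul_span', Ideal.span_le]
  rintro _ ⟨_, ⟨i, rfl⟩, _, ⟨j, rfl⟩, rfl⟩
  fin_cases i <;> fin_cases j
  exacts [I.le_radical h0, h01, h10, I.le_radical h2]

lemma vecDegree_symMul [IsDomain R] {p q : Fin 2 → R[X]} (hp : p ≠ 0) (hq : q ≠ 0) :
    vecDegree (symMul p q) = vecDegree p + vecDegree q := by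
  have hdeg (i j : Fin 2) : (p i * q j).natDegree ≤ vecDegree p + vecDegree q :=
    natDegree_mul_le_of_le (natDegree_le_vecDegree p i) (natDegree_le_vecDegree q j)
  have hcoeff (i j : Fin 2) : (p i * q j).coeff (vecDegree p + vecDegree q) =
      (p i).coeff (vecDegree p) * (q j).coeff (vecDegree q) :=
    coeff_mul_add_eq_of_natDegree_le (natDegree_le_vecDegree p i) (natDegree_le_vecDegree q j)
  refine vecDegree_eq (fun i => ?_) ?_
  · fin_cases i
    exacts [hdeg 0 0, natDegree_add_le_of_degree_le (hdeg 0 1) (hdeg 1 0), hdeg 1 1]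
  · convert symMul_ne_zero (coeff_vecDegree_ne_zero hp) (coeff_vecDegree_ne_zero hq) using 1
    ext i
    fin_cases i <;> simp [symMul, hcoeff]

end SymMul

section Homogeneous

variable {σ R : Type*} [CommSemiring R] {Φ : MvPolynomial σ R} {n : ℕ}

lemma eval_smul_of_isHomogeneous (hΦ : Φ.IsHomogeneous n) (c : R) (x : σ → R) :
    Φ.eval (c • x) = c ^ n * Φ.eval x := by
  rw [MvPolynomial.eval_eq, MvPolynomial.eval_eq, Finset.mul_sum]
  refine Finset.sum_congr rfl fun s hs => ?_
  have hc : ∏ i ∈ s.support, c ^ s i = c ^ n := by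
    rw [Finset.prod_pow_eq_pow_sum, hΦ.degree_eq_sum_deg_support hs]
  simp only [Pi.smul_apply, smul_eq_mul, mul_pow, Finset.prod_mul_distrib, hc]
  ring

variable {v : σ → R[X]} {d : ℕ}

lemma natDegree_aeval_le_of_isHomogeneous (hΦ : Φ.IsHomogeneous n)
    (hv : ∀ i, (v i).natDegree ≤ d) : (MvPolynomial.aeval v Φ).natDegree ≤ n * d := by
  rw [MvPolynomial.aeval_def, MvPolynomial.eval₂_eq]
  refine natDegree_sum_le_of_forall_le _ _ fun s hs => (natDegree_C_mul_le _ _).trans ?_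
  calc (∏ i ∈ s.support, v i ^ s i).natDegree
      ≤ ∑ i ∈ s.support, (v i ^ s i).natDegree := natDegree_prod_le _ _
    _ ≤ ∑ i ∈ s.support, s i * d := Finset.sum_le_sum fun i _ => natDegree_pow_le_of_le _ (hv i)
    _ = n * d := by rw [← Finset.sum_mul, hΦ.degree_eq_sum_deg_support hs]

lemma coeff_prod_sum_of_natDegree_le {ι : Type*} (s : Finset ι) {f : ι → R[X]} {e : ι → ℕ}
    (hf : ∀ i, (f i).natDegree ≤ e i) :
    (∏ i ∈ s, f i).coeff (∑ i ∈ s, e i) = ∏ i ∈ s, (f i).coeff (e i) := by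
  classical
  induction s using Finset.induction_on with
  | empty => simp
  | insert j s hj ih =>
    rw [Finset.prod_insert hj, Finset.sum_insert hj, Finset.prod_insert hj, ← ih]
    exact coeff_mul_add_eq_of_natDegree_le (hf j)
      ((natDegree_prod_le _ _).trans (Finset.sum_le_sum fun i _ => hf i))

lemma coeff_aeval_of_isHomogeneous (hΦ : Φ.IsHomogeneous n) (hv : ∀ i, (v i).natDegree ≤ d) :
    (MvPolynomial.aeval v Φ).coeff (n * d) = Φ.eval fun i => (v i).coeff d := by
  rw [MvPolynomial.aeval_def, MvPolynomial.eval₂_eq, finsetSum_coeff, MvPolynomial.eval_eq]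
  refine Finset.sum_congr rfl fun s hs => ?_
  rw [algebraMap_eq, coeff_C_mul, hΦ.degree_eq_sum_deg_support hs, Finset.sum_mul,
    coeff_prod_sum_of_natDegree_le _ fun i => natDegree_pow_le_of_le (s i) (hv i)]
  simp only [coeff_pow_of_natDegree_le (hv _)]

end Homogeneous

section AddSubMap

lemma map_addSubMap {R S : Type*} [CommRing R] [CommRing S] (W : WeierstrassCurve R)
    (f : R →+* S) (i : Fin 3) :
    addSubMap (W.map f) i = MvPolynomial.map f (addSubMap W i) := by
  fin_cases i <;> simp [addSubMap, map_ofNat]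

lemma eval_addSubMap_baseChange {R A : Type*} [CommRing R] [CommRing A] [Algebra R A]
    (W : WeierstrassCurve R) (v : Fin 3 → A) (i : Fin 3) :
    (addSubMap (W⁄A) i).eval v = MvPolynomial.aeval v (addSubMap W i) := by
  rw [baseChange, map_addSubMap, MvPolynomial.eval_map, ← MvPolynomial.aeval_def]

lemma primitive_addSubMap {R : Type*} [CommRing R] (W : WeierstrassCurve R) [W.IsElliptic]
    {v : Fin 3 → R} (hv : Ideal.span (Set.range v) = ⊤) :
    Ideal.span (Set.range fun i => (addSubMap W i).eval v) = ⊤ := by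
  rw [← Ideal.radical_eq_top, ← top_le_iff, ← hv, Ideal.span_le]
  rintro _ ⟨i, rfl⟩
  refine ⟨4, ?_⟩
  rw [← addSubMapCoeff_condition W v i]
  exact Ideal.sum_mem _ fun j _ => Ideal.mul_mem_left _ _ (Ideal.subset_span ⟨j, rfl⟩)

lemma vecDegree_addSubMap {F : Type*} [Field F] (W : WeierstrassCurve F) [W.IsElliptic]
    {v : Fin 3 → F[X]} (hv : v ≠ 0) :
    vecDegree (fun i => MvPolynomial.aeval v (addSubMap W i)) = 2 * vecDegree v := by
  have hdeg := natDegree_le_vecDegree v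
  refine vecDegree_eq
    (fun i => natDegree_aeval_le_of_isHomogeneous (isHomogeneous_addSubMap W i) hdeg) ?_
  simp only [coeff_aeval_of_isHomogeneous (isHomogeneous_addSubMap W _) hdeg]
  exact addSubMap_ne_zero W (coeff_vecDegree_ne_zero hv)

end AddSubMap

section AddX

section Ring

variable {R : Type*} [CommRing R] (W : Affine R)

/-- The numerator of the `x`-coordinate of `(x₁, y₁) + (x₂, y₂)` over the denominator
`(x₁ - x₂) ^ 2`, as given by the chord construction. -/
def addXNum (x₁ y₁ x₂ y₂ : R) : R :=
  (y₁ - y₂) ^ 2 + W.a₁ * (y₁ - y₂) * (x₁ - x₂) - (W.a₂ + x₁ + x₂) * (x₁ - x₂) ^ 2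

variable {W} {x₁ y₁ x₂ y₂ : R}

lemma baseChange_addXNum {F A B : Type*} [CommRing F] [CommRing A] [CommRing B] [Algebra F A]
    [Algebra F B] (W : WeierstrassCurve F) (f : A →ₐ[F] B) (x₁ y₁ x₂ y₂ : A) :
    addXNum (W⁄B).toAffine (f x₁) (f y₁) (f x₂) (f y₂) =
      f (addXNum (W⁄A).toAffine x₁ y₁ x₂ y₂) := by
  simp [addXNum, baseChange]

lemma addXNum_self (x y₁ y₂ : R) : addXNum W x y₁ x y₂ = (y₁ - y₂) ^ 2 := by
  simp [addXNum]

lemma addXNum_negY_negY (x₁ y₁ x₂ y₂ : R) :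
    addXNum W x₁ (W.negY x₁ y₁) x₂ (W.negY x₂ y₂) = addXNum W x₁ y₁ x₂ y₂ := by
  simp only [addXNum, Affine.negY]
  ring

lemma eval_addSubMap_zero (x₁ x₂ : R) :
    (addSubMap W 0).eval ![x₁ * x₂, x₁ + x₂, 1] =
      (x₁ * x₂) ^ 2 - W.b₄ * (x₁ * x₂) - W.b₆ * (x₁ + x₂) - W.b₈ := by
  simp [addSubMap]

lemma eval_addSubMap_one (x₁ x₂ : R) :
    (addSubMap W 1).eval ![x₁ * x₂, x₁ + x₂, 1] =
      2 * (x₁ + x₂) * (x₁ * x₂) + W.b₂ * (x₁ * x₂) + W.b₄ * (x₁ + x₂) + W.b₆ := by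
  simp [addSubMap]

lemma eval_addSubMap_two (x₁ x₂ : R) :
    (addSubMap W 2).eval ![x₁ * x₂, x₁ + x₂, 1] = (x₁ + x₂) ^ 2 - 4 * (x₁ * x₂) := by
  simp [addSubMap]

lemma addXNum_add_addXNum_negY (h₁ : W.Equation x₁ y₁) (h₂ : W.Equation x₂ y₂) :
    addXNum W x₁ y₁ x₂ y₂ + addXNum W x₁ y₁ x₂ (W.negY x₂ y₂) =
      (addSubMap W 1).eval ![x₁ * x₂, x₁ + x₂, 1] := by
  rw [Affine.equation_iff] at h₁ h₂
  simp only [addXNum, eval_addSubMap_one, Affine.negY, b₂, b₄, b₆]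
  linear_combination 2 * h₁ + 2 * h₂

lemma addXNum_mul_addXNum_negY (h₁ : W.Equation x₁ y₁) (h₂ : W.Equation x₂ y₂) :
    addXNum W x₁ y₁ x₂ y₂ * addXNum W x₁ y₁ x₂ (W.negY x₂ y₂) =
      (x₁ - x₂) ^ 2 * (addSubMap W 0).eval ![x₁ * x₂, x₁ + x₂, 1] := by
  rw [Affine.equation_iff] at h₁ h₂
  simp only [addXNum, eval_addSubMap_zero, Affine.negY, b₄, b₆, b₈]
  grind

lemma eval_addSubMap_one_self (h : W.Equation x₁ y₁) :
    (addSubMap W 1).eval ![x₁ * x₁, x₁ + x₁, 1] = (y₁ - W.negY x₁ y₁) ^ 2 := by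
  rw [Affine.equation_iff] at h
  simp only [eval_addSubMap_one, Affine.negY, b₂, b₄, b₆]
  linear_combination -4 * h

end Ring

section Field

variable {K : Type*} [Field K] {W : WeierstrassCurve K}

open Affine.Point in
lemma eval_addSubMap_sym2x_zero (P : W.toAffine.Point) :
    (fun i => (addSubMap W i).eval (P.sym2x 0)) = P.sym2x P := by
  rcases P with _ | ⟨x, y, h⟩
  · rw [← zero_def, sym2x_zero_zero]
    ext i
    fin_cases i <;> simp [addSubMap]
  · rw [sym2x_some_zero, sym2x_some_some]
    ext i
    fin_cases i <;> simp [addSubMap] <;> ring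

variable [DecidableEq K]

lemma addX_slope_mul_sq {x₁ y₁ x₂ y₂ : K} (hx : x₁ ≠ x₂) :
    W.toAffine.addX x₁ x₂ (W.toAffine.slope x₁ x₂ y₁ y₂) * (x₁ - x₂) ^ 2 =
      addXNum W.toAffine x₁ y₁ x₂ y₂ := by
  have hx' : x₁ - x₂ ≠ 0 := sub_ne_zero.2 hx
  rw [Affine.slope_of_X_ne hx, Affine.addX, addXNum]
  field_simp
  ring

open Affine.Point in
lemma eval_addSubMap_sym2x_of_X_ne {x₁ y₁ x₂ y₂ : K} (h₁ : W.toAffine.Nonsingular x₁ y₁)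
    (h₂ : W.toAffine.Nonsingular x₂ y₂) (hx : x₁ ≠ x₂) :
    (fun i => (addSubMap W i).eval ((some _ _ h₁).sym2x (some _ _ h₂))) =
      (x₁ - x₂) ^ 2 • (some _ _ h₁ + some _ _ h₂).sym2x (some _ _ h₁ - some _ _ h₂) := by
  have hx' : x₁ - x₂ ≠ 0 := sub_ne_zero.2 hx
  rw [sub_eq_add_neg (some _ _ h₁), neg_some, add_of_X_ne hx, add_of_X_ne hx,
    sym2x_some_some, sym2x_some_some]
  ext i
  fin_cases i
  · refine mul_left_cancel₀ (pow_ne_zero 2 hx') ?_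
    change _ * (addSubMap W 0).eval _ = _ * (_ * (_ * _))
    rw [← addXNum_mul_addXNum_negY h₁.1 h₂.1, ← addX_slope_mul_sq hx, ← addX_slope_mul_sq hx]
    ring
  · change (addSubMap W 1).eval _ = _ * (_ + _)
    rw [← addXNum_add_addXNum_negY h₁.1 h₂.1, ← addX_slope_mul_sq hx, ← addX_slope_mul_sq hx]
    ring
  · change (addSubMap W 2).eval _ = _ * 1
    rw [eval_addSubMap_two]
    ring

open Affine.Point in
lemma eval_addSubMap_sym2x_self_of_Y_eq {x y : K} (h : W.toAffine.Nonsingular x y)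
    (hy : y = W.toAffine.negY x y) :
    (fun i => (addSubMap W i).eval ((some _ _ h).sym2x (some _ _ h))) =
      (W.a₁ * y - (3 * x ^ 2 + 2 * W.a₂ * x + W.a₄)) ^ 2 •
        (some _ _ h + some _ _ h).sym2x 0 := by
  rw [add_self_of_Y_eq hy, sym2x_some_some, sym2x_zero_zero]
  ext i
  fin_cases i
  · have heq := (W.toAffine.equation_iff x y).1 h.1
    change (addSubMap W 0).eval _ = _ * 1
    simp only [Affine.negY] at hy
    simp only [eval_addSubMap_zero, b₄, b₆, b₈]
    grind
  · change (addSubMap W 1).eval _ = _ * 0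
    rw [eval_addSubMap_one_self h.1, ← hy]
    ring
  · change (addSubMap W 2).eval _ = _ * 0
    rw [eval_addSubMap_two]
    ring

open Affine.Point in
lemma eval_addSubMap_sym2x_self_of_Y_ne {x y : K} (h : W.toAffine.Nonsingular x y)
    (hy : y ≠ W.toAffine.negY x y) :
    (fun i => (addSubMap W i).eval ((some _ _ h).sym2x (some _ _ h))) =
      (y - W.toAffine.negY x y) ^ 2 • (some _ _ h + some _ _ h).sym2x 0 := by
  have hy' : y - W.toAffine.negY x y ≠ 0 := sub_ne_zero.2 hy
  rw [add_self_of_Y_ne hy, sym2x_some_some, sym2x_some_zero, Affine.slope_of_Y_ne rfl hy]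
  ext i
  fin_cases i
  · have heq := (W.toAffine.equation_iff x y).1 h.1
    change (addSubMap W 0).eval _ = _ * Affine.addX _ _ _ _
    rw [eval_addSubMap_zero, Affine.addX]
    field_simp
    simp only [Affine.negY, b₄, b₆, b₈]
    grind
  · change (addSubMap W 1).eval _ = _ * 1
    rw [eval_addSubMap_one_self h.1, mul_one]
  · change (addSubMap W 2).eval _ = _ * 0
    rw [eval_addSubMap_two]
    ring

open Affine.Point in
lemma eval_addSubMap_sym2x_self (P : W.toAffine.Point) :
    ∃ k : K, k ≠ 0 ∧ (fun i => (addSubMap W i).eval (P.sym2x P)) = k • (P + P).sym2x 0 := by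
  rcases P with _ | ⟨x, y, h⟩
  · refine ⟨1, one_ne_zero, ?_⟩
    rw [← zero_def, eval_addSubMap_sym2x_zero, add_zero, one_smul]
  by_cases hy : y = W.toAffine.negY x y
  · have hx : W.a₁ * y - (3 * x ^ 2 + 2 * W.a₂ * x + W.a₄) ≠ 0 := sub_ne_zero.2
      (((W.toAffine.nonsingular_iff x y).1 h).2.resolve_right (not_not.2 hy))
    exact ⟨_, pow_ne_zero 2 hx, eval_addSubMap_sym2x_self_of_Y_eq h hy⟩
  · exact ⟨_, pow_ne_zero 2 (sub_ne_zero.2 hy), eval_addSubMap_sym2x_self_of_Y_ne h hy⟩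

open Affine.Point in
lemma eval_addSubMap_sym2x (P Q : W.toAffine.Point) :
    ∃ k : K, k ≠ 0 ∧
      (fun i => (addSubMap W i).eval (P.sym2x Q)) = k • (P + Q).sym2x (P - Q) := by
  rcases eq_or_ne Q P with rfl | hsub
  · simpa using eval_addSubMap_sym2x_self Q
  rcases eq_or_ne P (-Q) with rfl | hadd
  · obtain ⟨k, hk, h⟩ := eval_addSubMap_sym2x_self (-Q)
    refine ⟨k, hk, ?_⟩
    rw [neg_add_cancel, sym2x_comm 0, sub_eq_add_neg, ← h, sym2x_neg_right]
  rcases hP : P with _ | ⟨x₁, y₁, h₁⟩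
  · refine ⟨1, one_ne_zero, ?_⟩
    rw [← zero_def, sym2x_comm, eval_addSubMap_sym2x_zero, zero_add, zero_sub, sym2x_neg_right]
    simp
  rcases hQ : Q with _ | ⟨x₂, y₂, h₂⟩
  · refine ⟨1, one_ne_zero, ?_⟩
    rw [← zero_def, eval_addSubMap_sym2x_zero]
    simp
  have hx : x₁ ≠ x₂ := by
    intro h
    rcases (X_eq_iff (h₁ := h₁) (h₂ := h₂)).1 h with h | h
    · exact hsub (by rw [hP, hQ, h])
    · exact hadd (by rw [hP, hQ, h])
  exact ⟨_, pow_ne_zero 2 (sub_ne_zero.2 hx), eval_addSubMap_sym2x_of_X_ne h₁ h₂ hx⟩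

end Field

end AddX

section ParallelogramLaw

variable {G : Type*} [AddCommGroup G] {h : G → ℤ}

lemma map_zero_of_parallelogram (hpar : ∀ x y, h (x + y) + h (x - y) = 2 * (h x + h y)) :
    h 0 = 0 := by
  have := hpar 0 0
  simp only [add_zero, sub_zero] at this
  linarith

lemma map_add_zsmul_of_parallelogram (hpar : ∀ x y, h (x + y) + h (x - y) = 2 * (h x + h y))
    (x y : G) (n : ℤ) : h (y + n • x) = h y + n * (h (x + y) - h x - h y) + n ^ 2 * h x := by
  have step (n : ℤ) :
      h (y + (n + 1) • x) + h (y + (n - 1) • x) = 2 * (h (y + n • x) + h x) := by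
    rw [← hpar]
    congr 2 <;> module
  suffices h (y + n • x) = h y + n * (h (x + y) - h x - h y) + n ^ 2 * h x ∧
      h (y + (n + 1) • x) =
        h y + (n + 1) * (h (x + y) - h x - h y) + (n + 1) ^ 2 * h x from this.1
  induction n with
  | zero => simp [add_comm]
  | succ n ih =>
    have := step (n + 1)
    rw [add_sub_cancel_right] at this
    exact ⟨ih.2, by linear_combination this + 2 * ih.2 - ih.1⟩
  | pred n ih =>
    rw [sub_add_cancel]
    exact ⟨by linear_combination step (-n) + 2 * ih.1 - ih.2, ih.1⟩

lemma map_zsmul_of_parallelogram (hpar : ∀ x y, h (x + y) + h (x - y) = 2 * (h x + h y))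
    (x : G) (n : ℤ) : h (n • x) = n ^ 2 * h x := by
  simpa [map_zero_of_parallelogram hpar] using map_add_zsmul_of_parallelogram hpar x 0 n

lemma sq_le_of_parallelogram (hpar : ∀ x y, h (x + y) + h (x - y) = 2 * (h x + h y))
    (hnonneg : ∀ x, 0 ≤ h x) (x y : G) : (h (x + y) - h x - h y) ^ 2 ≤ 4 * h x * h y := by
  set B := h (x + y) - h x - h y
  have form_nonneg (m n : ℤ) : 0 ≤ m ^ 2 * h y + m * n * B + n ^ 2 * h x := by
    have h_zsmul := map_zsmul_of_parallelogram hpar y m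
    have h_add := map_add_zsmul_of_parallelogram hpar y x m
    rw [add_comm y x] at h_add
    calc 0 ≤ h (m • y + n • x) := hnonneg _
      _ = m ^ 2 * h y + m * n * B + n ^ 2 * h x := by
        rw [map_add_zsmul_of_parallelogram hpar, h_zsmul, h_add]
        ring
  rcases (hnonneg x).eq_or_lt with hx | hx
  · have hB_sq : (h y + 1) * B ^ 2 ≤ h y := by
      linear_combination form_nonneg 1 (-(h y + 1) * B) - ((h y + 1) * B) ^ 2 * hx
    rw [← hx, mul_zero, zero_mul]
    by_contra! hpos
    nlinarith [hnonneg y]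
  · have : 0 ≤ h x * (4 * h x * h y - B ^ 2) := by
      linear_combination form_nonneg (2 * h x) (-B)
    linarith [nonneg_of_mul_nonneg_right this hx]

end ParallelogramLaw

section Height

variable {ι A K : Type*} [CommRing A] [Field K] [Algebra A K]

/-- The vector `v` over `A` is, up to scaling, the vector `x` of homogeneous coordinates over
`K`. -/
def Represents (v : ι → A) (x : ι → K) : Prop :=
  ∃ c : K, c ≠ 0 ∧ ∀ i, algebraMap A K (v i) = c * x i

namespace Represents

variable {v w : ι → A} {x y : ι → K}

lemma smul (h : Represents v x) {k : K} (hk : k ≠ 0) : Represents v (k • x) := by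
  obtain ⟨c, hc, hv⟩ := h
  refine ⟨c * k⁻¹, mul_ne_zero hc (inv_ne_zero hk), fun i => ?_⟩
  rw [hv, Pi.smul_apply, smul_eq_mul, mul_assoc, inv_mul_cancel_left₀ hk]

lemma ne_zero (h : Represents v x) (hx : x ≠ 0) : v ≠ 0 := by
  obtain ⟨c, hc, hv⟩ := h
  rintro rfl
  exact hx (funext fun i => by simpa [hc] using (hv i).symm)

lemma symMul {v w : Fin 2 → A} {x y : Fin 2 → K} (hv : Represents v x) (hw : Represents w y) :
    Represents (symMul v w) (symMul x y) := by
  obtain ⟨c, hc, hv⟩ := hv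
  obtain ⟨d, hd, hw⟩ := hw
  refine ⟨c * d, mul_ne_zero hc hd, fun i => ?_⟩
  rw [map_symMul, funext hv, funext hw]
  exact congrFun (symMul_smul_smul c d x y) i

lemma addSubMap {R : Type*} [CommRing R] [Algebra R A] [Algebra R K] [IsScalarTower R A K]
    (W : WeierstrassCurve R) {v : Fin 3 → A} {x : Fin 3 → K} (hv : Represents v x) :
    Represents (fun i => MvPolynomial.aeval v (addSubMap W i))
      (fun i => (addSubMap (W⁄K) i).eval x) := by
  obtain ⟨c, hc, hv⟩ := hv
  refine ⟨c ^ 2, pow_ne_zero 2 hc, fun i => ?_⟩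
  rw [← eval_smul_of_isHomogeneous (isHomogeneous_addSubMap _ i), eval_addSubMap_baseChange,
    ← MvPolynomial.aeval_algebraMap_apply]
  exact congrArg (MvPolynomial.aeval · _) (funext hv)

variable [FaithfulSMul A K]

lemma mul_eq_mul (hv : Represents v x) (hw : Represents w x) (i j : ι) :
    v i * w j = v j * w i := by
  obtain ⟨c, -, hv⟩ := hv
  obtain ⟨d, -, hw⟩ := hw
  apply FaithfulSMul.algebraMap_injective A K
  rw [map_mul, map_mul, hv, hw, hv, hw]
  ring

lemma exists_primitive [Finite ι] [IsDomain A] [IsPrincipalIdealRing A] (hx : x ≠ 0)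
    (hv : Represents v x) : ∃ w : ι → A, Ideal.span (Set.range w) = ⊤ ∧ Represents w x := by
  obtain ⟨g, hg, w, hw, rfl⟩ := exists_eq_smul_primitive (hv.ne_zero hx)
  obtain ⟨c, hc, hv⟩ := hv
  have hg' : algebraMap A K g ≠ 0 := by
    rwa [Ne, FaithfulSMul.algebraMap_eq_zero_iff]
  refine ⟨w, hw, (algebraMap A K g)⁻¹ * c, mul_ne_zero (inv_ne_zero hg') hc, fun i => ?_⟩
  rw [mul_assoc, ← hv, Pi.smul_apply, smul_eq_mul, map_mul, inv_mul_cancel_left₀ hg']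

end Represents

variable (F : Type*) [Field F] [Algebra F[X] K]

/-- The logarithmic height, relative to the rational function field `F(X)`, of a point of
projective space given by homogeneous coordinates `x` in an extension `K` of `F(X)`: the least
degree of a vector of polynomials representing it (`0` if there is none). -/
noncomputable def height [Fintype ι] (x : ι → K) : ℕ :=
  sInf {d | ∃ v : ι → F[X], Represents v x ∧ vecDegree v = d}

variable {F} [Fintype ι] {v : ι → F[X]} {x : ι → K}

lemma height_le (hv : Represents v x) : height F x ≤ vecDegree v :=
  Nat.sInf_le ⟨v, hv, rfl⟩

variable [FaithfulSMul F[X] K]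

lemma height_eq_of_primitive (hx : x ≠ 0) (hv : Represents v x)
    (hprim : Ideal.span (Set.range v) = ⊤) : height F x = vecDegree v := by
  refine (height_le hv).antisymm (le_csInf ⟨_, v, hv, rfl⟩ ?_)
  rintro _ ⟨w, hw, rfl⟩
  exact vecDegree_le_of_primitive hprim (hw.ne_zero hx) (hv.mul_eq_mul hw)

lemma height_smul (hx : x ≠ 0) (hv : Represents v x) {k : K} (hk : k ≠ 0) :
    height F (k • x) = height F x := by
  obtain ⟨w, hprim, hw⟩ := hv.exists_primitive hx
  rw [height_eq_of_primitive hx hw hprim,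
    height_eq_of_primitive (smul_ne_zero hk hx) (hw.smul hk) hprim]

lemma height_symMul {v w : Fin 2 → F[X]} {x y : Fin 2 → K} (hx : x ≠ 0) (hy : y ≠ 0)
    (hv : Represents v x) (hw : Represents w y) :
    height F (symMul x y) = height F x + height F y := by
  obtain ⟨v, hv_prim, hv⟩ := hv.exists_primitive hx
  obtain ⟨w, hw_prim, hw⟩ := hw.exists_primitive hy
  rw [height_eq_of_primitive hx hv hv_prim, height_eq_of_primitive hy hw hw_prim,
    height_eq_of_primitive (symMul_ne_zero hx hy) (hv.symMul hw) (primitive_symMul hv_prim hw_prim),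
    vecDegree_symMul (hv.ne_zero hx) (hw.ne_zero hy)]

variable [Algebra F K] [IsScalarTower F F[X] K] (W : WeierstrassCurve F)

lemma height_addSubMap [W.IsElliptic] {v : Fin 3 → F[X]} {x : Fin 3 → K} (hx : x ≠ 0)
    (hv : Represents v x) :
    height F (fun i => (addSubMap (W⁄K) i).eval x) = 2 * height F x := by
  obtain ⟨v, hprim, hv⟩ := hv.exists_primitive hx
  have : (W⁄F[X]).IsElliptic := inferInstanceAs (W.map (algebraMap F F[X])).IsElliptic
  have hprim' : Ideal.span (Set.range fun i => MvPolynomial.aeval v (addSubMap W i)) = ⊤ := by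
    simpa only [eval_addSubMap_baseChange] using primitive_addSubMap (W⁄F[X]) hprim
  have : (W⁄K).IsElliptic := inferInstanceAs (W.map (algebraMap F K)).IsElliptic
  rw [height_eq_of_primitive (addSubMap_ne_zero _ hx) (hv.addSubMap W) hprim',
    height_eq_of_primitive hx hv hprim, vecDegree_addSubMap W (hv.ne_zero hx)]

variable [DecidableEq K]

theorem height_add_height_sub [W.IsElliptic] {P Q : (W⁄K).toAffine.Point}
    {vP vQ v w : Fin 2 → F[X]} (hP : Represents vP P.xRep) (hQ : Represents vQ Q.xRep)
    (hadd : Represents v (P + Q).xRep) (hsub : Represents w (P - Q).xRep) :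
    height F (P + Q).xRep + height F (P - Q).xRep =
      2 * (height F P.xRep + height F Q.xRep) := by
  have sym2x_eq (P Q : (W⁄K).toAffine.Point) : P.sym2x Q = symMul P.xRep Q.xRep := rfl
  obtain ⟨k, hk, heq⟩ := eval_addSubMap_sym2x P Q
  rw [sym2x_eq, sym2x_eq] at heq
  have hne (P Q : (W⁄K).toAffine.Point) : symMul P.xRep Q.xRep ≠ 0 :=
    symMul_ne_zero P.xRep_ne_zero Q.xRep_ne_zero
  rw [← height_symMul (P + Q).xRep_ne_zero (P - Q).xRep_ne_zero hadd hsub,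
    ← height_smul (hne _ _) (hadd.symMul hsub) hk, ← heq,
    height_addSubMap W (hne P Q) (hP.symMul hQ),
    height_symMul P.xRep_ne_zero Q.xRep_ne_zero hP hQ]

end Height

section GenericPoint

variable {F : Type*} [Field F] (W : WeierstrassCurve F)

section Lift

variable {W} {S : Type*} [CommRing S] [Algebra F S] {x y : S}

lemma eval₂_polynomial_eq_zero_iff :
    W.toAffine.polynomial.eval₂ (aeval (R := F) x : F[X] →+* S) y = 0 ↔
      (W⁄S).toAffine.Equation x y := by
  rw [Affine.equation_iff', Affine.polynomial]
  simp only [eval₂_sub, eval₂_add, eval₂_mul, eval₂_pow, eval₂_C, eval₂_X, RingHom.coe_coe, map_add,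
    map_mul, map_pow, aeval_C, aeval_X, baseChange, map_a₁, map_a₂, map_a₃, map_a₄, map_a₆]
  rw [add_mul, ← add_assoc]

/-- The homomorphism from the coordinate ring of `W` given by evaluation at a point `(x, y)` of
`W`. -/
noncomputable def evalPoint (h : (W⁄S).toAffine.Equation x y) :
    W.toAffine.CoordinateRing →ₐ[F] S :=
  AdjoinRoot.liftAlgHom _ (aeval x) y (eval₂_polynomial_eq_zero_iff.mpr h)

lemma evalPoint_algebraMap (h : (W⁄S).toAffine.Equation x y) (p : F[X]) :
    evalPoint h (algebraMap F[X] _ p) = aeval x p :=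
  AdjoinRoot.liftAlgHom_of ..

end Lift

/-- The `x`-coordinate function on `W`. -/
noncomputable def coordX : W.toAffine.CoordinateRing :=
  algebraMap F[X] _ X

/-- The `y`-coordinate function on `W`. -/
noncomputable def coordY : W.toAffine.CoordinateRing :=
  AdjoinRoot.root _

lemma evalPoint_coordX {S : Type*} [CommRing S] [Algebra F S] {x y : S}
    (h : (W⁄S).toAffine.Equation x y) : evalPoint h (coordX W) = x := by
  rw [coordX, evalPoint_algebraMap, aeval_X]

lemma evalPoint_coordY {S : Type*} [CommRing S] [Algebra F S] {x y : S}
    (h : (W⁄S).toAffine.Equation x y) : evalPoint h (coordY W) = y :=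
  AdjoinRoot.liftAlgHom_root ..

lemma aeval_coordX (p : F[X]) : aeval (coordX W) p = algebraMap F[X] _ p := by
  rw [coordX, aeval_algebraMap_apply, aeval_X_left_apply]

lemma equation_coordX_coordY :
    (W⁄W.toAffine.CoordinateRing).toAffine.Equation (coordX W) (coordY W) := by
  rw [← eval₂_polynomial_eq_zero_iff, show ((aeval (coordX W) : F[X] →ₐ[F] _) : F[X] →+* _) =
    AdjoinRoot.of W.toAffine.polynomial from RingHom.ext (aeval_coordX W)]
  exact AdjoinRoot.eval₂_root _

/-- The involution of the coordinate ring induced by negation on `W`. -/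
noncomputable def involution : W.toAffine.CoordinateRing →ₐ[F] W.toAffine.CoordinateRing :=
  evalPoint ((Affine.equation_neg (W' := (W⁄_).toAffine) ..).mpr (equation_coordX_coordY W))

lemma involution_algebraMap (p : F[X]) : involution W (algebraMap F[X] _ p) = algebraMap F[X] _ p :=
  (evalPoint_algebraMap ..).trans (aeval_coordX W p)

lemma involution_coordX : involution W (coordX W) = coordX W :=
  involution_algebraMap W X

lemma involution_coordY : involution W (coordY W) =
    (W⁄W.toAffine.CoordinateRing).toAffine.negY (coordX W) (coordY W) :=
  evalPoint_coordY W _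

lemma exists_eq_add_mul_coordY (z : W.toAffine.CoordinateRing) :
    ∃ p r : F[X], z = algebraMap F[X] _ p + algebraMap F[X] _ r * coordY W := by
  obtain ⟨p, r, rfl⟩ := Affine.CoordinateRing.exists_smul_basis_eq z
  exact ⟨p, r, by rw [Algebra.smul_def, Algebra.smul_def, mul_one]; rfl⟩

lemma involution_involution (z : W.toAffine.CoordinateRing) :
    involution W (involution W z) = z := by
  obtain ⟨p, r, rfl⟩ := exists_eq_add_mul_coordY W z
  simp only [map_add, map_mul, involution_algebraMap, involution_coordY,
    ← Affine.baseChange_negY, involution_coordX, Affine.negY_negY]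

lemma involution_negY : involution W ((W⁄W.toAffine.CoordinateRing).toAffine.negY
    (coordX W) (coordY W)) = (W⁄W.toAffine.CoordinateRing).toAffine.negY (coordX W)
      ((W⁄W.toAffine.CoordinateRing).toAffine.negY (coordX W) (coordY W)) := by
  rw [Affine.negY_negY, ← involution_coordY, involution_involution]

lemma involution_injective : Function.Injective (involution W) :=
  Function.LeftInverse.injective (involution_involution W)

/-- The involution of the function field induced by negation on `W`. -/
noncomputable def functionFieldInvolution :
    W.toAffine.FunctionField →ₐ[F] W.toAffine.FunctionField :=
  IsFractionRing.liftAlgHom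
    (g := (IsScalarTower.toAlgHom F W.toAffine.CoordinateRing _).comp (involution W))
    ((IsFractionRing.injective _ _).comp (involution_injective W))

lemma functionFieldInvolution_algebraMap (z : W.toAffine.CoordinateRing) :
    functionFieldInvolution W (algebraMap _ _ z) = algebraMap _ _ (involution W z) :=
  IsFractionRing.lift_algebraMap (A := W.toAffine.CoordinateRing)
    (g := ((IsScalarTower.toAlgHom F W.toAffine.CoordinateRing W.toAffine.FunctionField).comp
      (involution W)).toRingHom)
    ((IsFractionRing.injective _ W.toAffine.FunctionField).comp (involution_injective W)) z

lemma algebraMap_a₁_mul_X_add_a₃ : algebraMap F[X] _ (C W.a₁ * X + C W.a₃) =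
    -coordY W - (W⁄W.toAffine.CoordinateRing).toAffine.negY (coordX W) (coordY W) := by
  rw [← aeval_coordX, Affine.negY]
  simp only [map_add, map_mul, aeval_C, aeval_X, baseChange, map_a₁, map_a₃]
  ring

variable [W.IsElliptic]

lemma two_ne_zero_or_a₁_mul_X_add_a₃_ne_zero : (2 : F) ≠ 0 ∨ C W.a₁ * X + C W.a₃ ≠ 0 := by
  by_contra! h
  obtain ⟨h₂, hlin⟩ := h
  have h₁ : W.a₁ = 0 := by simpa using congrArg (coeff · 1) hlin
  have h₃ : W.a₃ = 0 := by simpa using congrArg (coeff · 0) hlin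
  apply W.isUnit_Δ.ne_zero
  simp only [Δ, b₂, b₄, b₆, b₈, h₁, h₃]
  linear_combination (-8 * W.a₂ ^ 2 * (4 * W.a₂ * W.a₆ - W.a₄ ^ 2) - 32 * W.a₄ ^ 3 -
    216 * W.a₆ ^ 2 + 144 * W.a₂ * W.a₄ * W.a₆) * h₂

variable {W}

lemma exists_algebraMap_eq_of_involution_eq {z : W.toAffine.CoordinateRing}
    (hz : involution W z = z) : ∃ p : F[X], algebraMap F[X] _ p = z := by
  obtain ⟨p, r, rfl⟩ := exists_eq_add_mul_coordY W z
  simp only [map_add, map_mul, involution_algebraMap, involution_coordY] at hz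
  obtain ⟨hr₀, hr₁⟩ := Affine.CoordinateRing.smul_basis_eq_zero (W' := W.toAffine)
    (p := r * (C W.a₁ * X + C W.a₃)) (q := 2 * r) (by
      rw [Algebra.smul_def, Algebra.smul_def, map_mul, algebraMap_a₁_mul_X_add_a₃, map_mul,
        map_ofNat]
      change _ + _ * coordY W = 0
      linear_combination -hz)
  have hr : r = 0 := by
    rcases two_ne_zero_or_a₁_mul_X_add_a₃_ne_zero W with h | h
    · have h' : (2 : F[X]) ≠ 0 := by exact_mod_cast C_ne_zero.mpr h
      exact (mul_eq_zero.mp hr₁).resolve_left h'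
    · exact (mul_eq_zero.mp hr₀).resolve_right h
  exact ⟨p, by rw [hr, map_zero, zero_mul, add_zero]⟩

lemma exists_mul_algebraMap_eq_of_functionFieldInvolution_eq {z : W.toAffine.FunctionField}
    (hz : functionFieldInvolution W z = z) :
    ∃ p n : F[X], n ≠ 0 ∧ z * algebraMap _ _ n = algebraMap _ _ p := by
  obtain ⟨a, b, hb, rfl⟩ := IsFractionRing.div_surjective (A := W.toAffine.CoordinateRing) z
  have hb : b ≠ 0 := nonZeroDivisors.ne_zero hb
  have hσb : involution W b ≠ 0 := (map_ne_zero_iff _ (involution_injective W)).mpr hb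
  rw [map_div₀, functionFieldInvolution_algebraMap, functionFieldInvolution_algebraMap,
    div_eq_div_iff (by simpa using hσb) (by simpa using hb), ← map_mul, ← map_mul] at hz
  obtain ⟨n, hn⟩ := exists_algebraMap_eq_of_involution_eq (W := W) (z := b * involution W b)
    (by rw [map_mul, involution_involution, mul_comm])
  obtain ⟨p, hp⟩ := exists_algebraMap_eq_of_involution_eq (W := W) (z := a * involution W b)
    (by rw [map_mul, involution_involution]; exact IsFractionRing.injective _ _ hz)
  refine ⟨p, n, ?_, ?_⟩
  · rintro rfl
    rw [map_zero] at hn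
    exact mul_ne_zero hb hσb hn.symm
  · rw [IsScalarTower.algebraMap_apply F[X] W.toAffine.CoordinateRing, hn,
      IsScalarTower.algebraMap_apply F[X] W.toAffine.CoordinateRing _ p, hp, map_mul, map_mul]
    have : algebraMap _ W.toAffine.FunctionField b ≠ 0 := by simpa using hb
    field_simp

end GenericPoint

section Points

variable {F : Type*} [Field F]

lemma represents_of_mul_eq {K : Type*} [Field K] [Algebra F[X] K] [FaithfulSMul F[X] K] {x : K}
    {p n : F[X]} (hn : n ≠ 0) (hx : x * algebraMap _ _ n = algebraMap _ _ p) :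
    Represents ![p, n] ![x, 1] := by
  refine ⟨algebraMap _ _ n, by rwa [Ne, FaithfulSMul.algebraMap_eq_zero_iff], fun i => ?_⟩
  fin_cases i
  · simp [← hx, mul_comm]
  · simp

lemma height_algebraMap {K : Type*} [Field K] [Algebra F[X] K] [FaithfulSMul F[X] K] (p : F[X]) :
    height F ![algebraMap F[X] K p, 1] = p.natDegree := by
  have hrep : Represents ![p, 1] ![algebraMap F[X] K p, 1] :=
    represents_of_mul_eq one_ne_zero (by simp)
  have hprim : Ideal.span (Set.range ![p, 1]) = ⊤ :=
    Ideal.eq_top_of_unit_mem _ 1 1 (Ideal.subset_span ⟨1, rfl⟩) (one_mul 1)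
  rw [height_eq_of_primitive (fun h => one_ne_zero (congrFun h 1)) hrep hprim]
  refine (vecDegree_le fun i => ?_).antisymm (natDegree_le_vecDegree ![p, 1] 0)
  fin_cases i <;> simp

variable (W : WeierstrassCurve F) [W.IsElliptic]

lemma nonsingular_generic : (W⁄W.toAffine.FunctionField).toAffine.Nonsingular
    (algebraMap _ _ (coordX W)) (algebraMap _ _ (coordY W)) := by
  have : (W⁄W.toAffine.FunctionField).IsElliptic :=
    inferInstanceAs (W.map (algebraMap F W.toAffine.FunctionField)).IsElliptic
  exact Affine.equation_iff_nonsingular.mp <| (equation_coordX_coordY W).baseChange (S := F)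
    (IsScalarTower.toAlgHom F W.toAffine.CoordinateRing W.toAffine.FunctionField)

/-- The tautological point of `W` over its own function field. -/
noncomputable def genericPoint : (W⁄W.toAffine.FunctionField).toAffine.Point :=
  .some _ _ (nonsingular_generic W)

lemma neg_genericPoint : ∃ h, -genericPoint W = .some (algebraMap _ _ (coordX W))
    (algebraMap _ _ ((W⁄W.toAffine.CoordinateRing).toAffine.negY (coordX W) (coordY W))) h := by
  have hnegY := Affine.baseChange_negY (S := F) (W' := W.toAffine)
    (IsScalarTower.toAlgHom F W.toAffine.CoordinateRing W.toAffine.FunctionField)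
    (coordX W) (coordY W)
  rw [IsScalarTower.coe_toAlgHom'] at hnegY
  rw [← hnegY]
  exact ⟨_, rfl⟩

/-- The image of the generic point under the Frobenius endomorphism. -/
noncomputable def frobeniusPoint [Fintype F] : (W⁄W.toAffine.FunctionField).toAffine.Point :=
  Affine.Point.map (FiniteField.frobeniusAlgHom F W.toAffine.FunctionField) (genericPoint W)

lemma xRep_genericPoint : (genericPoint W).xRep = ![algebraMap F[X] _ X, 1] :=
  rfl

lemma xRep_frobeniusPoint [Fintype F] :
    (frobeniusPoint W).xRep = ![algebraMap F[X] _ (X ^ Fintype.card F), 1] := by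
  rw [map_pow]
  rfl

lemma height_genericPoint : height F (genericPoint W).xRep = 1 := by
  rw [xRep_genericPoint, height_algebraMap, natDegree_X]

lemma height_frobeniusPoint [Fintype F] : height F (frobeniusPoint W).xRep = Fintype.card F := by
  rw [xRep_frobeniusPoint, height_algebraMap, natDegree_X_pow]

/-- The group of odd maps `φ : W → W`, those with `φ (-P) = -φ P`, viewed as points over the
function field on which the involution acts as negation. -/
noncomputable def antiInvariant : AddSubgroup (W⁄W.toAffine.FunctionField).toAffine.Point :=
  (Affine.Point.map (functionFieldInvolution W)).eqLocus negAddMonoidHom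

variable {W}

lemma exists_represents_xRep {P : (W⁄W.toAffine.FunctionField).toAffine.Point}
    (hP : P ∈ antiInvariant W) : ∃ v : Fin 2 → F[X], Represents v P.xRep := by
  cases P with
  | zero => exact ⟨![1, 0], 1, one_ne_zero, fun i => by fin_cases i <;> simp [Affine.Point.xRep]⟩
  | some x y h =>
    replace hP : Affine.Point.map (functionFieldInvolution W) (.some x y h) = -.some x y h := hP
    rw [Affine.Point.map_some, Affine.Point.neg_some] at hP
    obtain ⟨p, n, hn, hx⟩ :=
      exists_mul_algebraMap_eq_of_functionFieldInvolution_eq (Affine.Point.some.inj hP).1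
    exact ⟨_, represents_of_mul_eq hn hx⟩

theorem height_add_height_sub_of_mem_antiInvariant
    {P Q : (W⁄W.toAffine.FunctionField).toAffine.Point} (hP : P ∈ antiInvariant W)
    (hQ : Q ∈ antiInvariant W) :
    height F (P + Q).xRep + height F (P - Q).xRep =
      2 * (height F P.xRep + height F Q.xRep) := by
  obtain ⟨_, hvP⟩ := exists_represents_xRep hP
  obtain ⟨_, hvQ⟩ := exists_represents_xRep hQ
  obtain ⟨_, hadd⟩ := exists_represents_xRep (add_mem hP hQ)
  obtain ⟨_, hsub⟩ := exists_represents_xRep (sub_mem hP hQ)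
  exact height_add_height_sub W hvP hvQ hadd hsub

variable (W)

lemma genericPoint_mem_antiInvariant : genericPoint W ∈ antiInvariant W := by
  obtain ⟨h, hneg⟩ := neg_genericPoint W
  change Affine.Point.map (functionFieldInvolution W) (genericPoint W) = -genericPoint W
  rw [hneg, genericPoint, Affine.Point.map_some]
  congr 1
  · rw [functionFieldInvolution_algebraMap, involution_coordX]
  · rw [functionFieldInvolution_algebraMap, involution_coordY]

lemma frobeniusPoint_mem_antiInvariant [Fintype F] : frobeniusPoint W ∈ antiInvariant W := by
  have h : Affine.Point.map (functionFieldInvolution W) (genericPoint W) = -genericPoint W :=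
    genericPoint_mem_antiInvariant W
  have hcomm : (functionFieldInvolution W).comp (FiniteField.frobeniusAlgHom F _) =
      (FiniteField.frobeniusAlgHom F _).comp (functionFieldInvolution W) :=
    AlgHom.ext fun z => by simp
  change Affine.Point.map (functionFieldInvolution W) (frobeniusPoint W) = -frobeniusPoint W
  rw [frobeniusPoint, Affine.Point.map_map, hcomm, ← Affine.Point.map_map, h, map_neg]

end Points

section Numerators

variable {F : Type*} [Field F] [Fintype F]

lemma negY_pow_card {A : Type*} [CommRing A] [Algebra F A] (W : WeierstrassCurve F) (x y : A) :
    (W⁄A).toAffine.negY (x ^ Fintype.card F) (y ^ Fintype.card F) =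
      (W⁄A).toAffine.negY x y ^ Fintype.card F :=
  Affine.baseChange_negY (FiniteField.frobeniusAlgHom F A) x y

lemma equation_pow_card {A : Type*} [CommRing A] [Algebra F A] {W : WeierstrassCurve F} {x y : A}
    (h : (W⁄A).toAffine.Equation x y) :
    (W⁄A).toAffine.Equation (x ^ Fintype.card F) (y ^ Fintype.card F) :=
  h.baseChange (S := F) (FiniteField.frobeniusAlgHom F A)

variable (W : WeierstrassCurve F)

lemma algebraMap_eval_addSubMap (i : Fin 3) : algebraMap F[X] W.toAffine.CoordinateRing
    ((addSubMap (W⁄F[X]) i).eval ![X ^ Fintype.card F * X, X ^ Fintype.card F + X, 1]) =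
      (addSubMap (W⁄W.toAffine.CoordinateRing) i).eval
        ![coordX W ^ Fintype.card F * coordX W, coordX W ^ Fintype.card F + coordX W, 1] := by
  rw [eval_addSubMap_baseChange, eval_addSubMap_baseChange, ← MvPolynomial.aeval_algebraMap_apply]
  congr 2
  ext j
  fin_cases j <;> simp [coordX]

variable [W.IsElliptic]

lemma exists_algebraMap_eq_addXNum {y : W.toAffine.CoordinateRing}
    (hy : involution W y = (W⁄W.toAffine.CoordinateRing).toAffine.negY (coordX W) y) :
    ∃ p : F[X], algebraMap F[X] _ p = addXNum (W⁄W.toAffine.CoordinateRing).toAffine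
      (coordX W ^ Fintype.card F) (coordY W ^ Fintype.card F) (coordX W) y := by
  refine exists_algebraMap_eq_of_involution_eq ?_
  rw [← baseChange_addXNum, map_pow, map_pow, involution_coordX, involution_coordY, hy,
    ← negY_pow_card, addXNum_negY_negY]

/-- The numerator, over the denominator `(X ^ q - X) ^ 2`, of the `x`-coordinate of `φ P + P` as a
function of the `x`-coordinate of `P`, where `φ` is the Frobenius endomorphism. -/
noncomputable def frobeniusAddNum : F[X] :=
  (exists_algebraMap_eq_addXNum W (involution_coordY W)).choose

/-- The numerator, over the denominator `(X ^ q - X) ^ 2`, of the `x`-coordinate of `φ P - P` as a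
function of the `x`-coordinate of `P`, where `φ` is the Frobenius endomorphism. -/
noncomputable def frobeniusSubNum : F[X] :=
  (exists_algebraMap_eq_addXNum W (involution_negY W)).choose

lemma algebraMap_frobeniusAddNum : algebraMap F[X] _ (frobeniusAddNum W) =
    addXNum (W⁄W.toAffine.CoordinateRing).toAffine
      (coordX W ^ Fintype.card F) (coordY W ^ Fintype.card F) (coordX W) (coordY W) :=
  (exists_algebraMap_eq_addXNum W (involution_coordY W)).choose_spec

lemma algebraMap_frobeniusSubNum : algebraMap F[X] _ (frobeniusSubNum W) =
    addXNum (W⁄W.toAffine.CoordinateRing).toAffine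
      (coordX W ^ Fintype.card F) (coordY W ^ Fintype.card F) (coordX W)
      ((W⁄W.toAffine.CoordinateRing).toAffine.negY (coordX W) (coordY W)) :=
  (exists_algebraMap_eq_addXNum W (involution_negY W)).choose_spec

lemma frobeniusAddNum_add_frobeniusSubNum : frobeniusAddNum W + frobeniusSubNum W =
    (addSubMap (W⁄F[X]) 1).eval ![X ^ Fintype.card F * X, X ^ Fintype.card F + X, 1] := by
  apply FaithfulSMul.algebraMap_injective F[X] W.toAffine.CoordinateRing
  have h := equation_coordX_coordY W
  rw [map_add, algebraMap_frobeniusAddNum, algebraMap_frobeniusSubNum,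
    addXNum_add_addXNum_negY (equation_pow_card h) h, algebraMap_eval_addSubMap]

lemma frobeniusAddNum_mul_frobeniusSubNum : frobeniusAddNum W * frobeniusSubNum W =
    (X ^ Fintype.card F - X) ^ 2 *
      (addSubMap (W⁄F[X]) 0).eval ![X ^ Fintype.card F * X, X ^ Fintype.card F + X, 1] := by
  apply FaithfulSMul.algebraMap_injective F[X] W.toAffine.CoordinateRing
  have h := equation_coordX_coordY W
  rw [map_mul, algebraMap_frobeniusAddNum, algebraMap_frobeniusSubNum,
    addXNum_mul_addXNum_negY (equation_pow_card h) h, map_mul, algebraMap_eval_addSubMap, map_pow,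
    map_sub, map_pow]
  rfl

lemma natDegree_frobeniusAddNum_add_frobeniusSubNum_le :
    (frobeniusAddNum W + frobeniusSubNum W).natDegree ≤ 2 * Fintype.card F + 1 := by
  have := Fintype.card_pos (α := F)
  rw [frobeniusAddNum_add_frobeniusSubNum, eval_addSubMap_one]
  simp only [baseChange, map_b₂, map_b₄, map_b₆, algebraMap_eq]
  compute_degree
  omega

lemma natDegree_frobeniusAddNum_mul_frobeniusSubNum_le :
    (frobeniusAddNum W * frobeniusSubNum W).natDegree ≤ 2 * (2 * Fintype.card F + 1) := by
  have := Fintype.card_pos (α := F)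
  rw [frobeniusAddNum_mul_frobeniusSubNum, eval_addSubMap_zero]
  simp only [baseChange, map_b₄, map_b₆, map_b₈, algebraMap_eq]
  compute_degree
  omega

variable {W}

lemma algebraMap_eval_frobeniusAddNum {L : Type*} [Field L] [Algebra F L] {x : F} {y : L}
    (h : (W⁄L).toAffine.Equation (algebraMap F L x) y) :
    algebraMap F L ((frobeniusAddNum W).eval x) = (y ^ Fintype.card F - y) ^ 2 := by
  rw [← aeval_algebraMap_apply_eq_algebraMap_eval, ← evalPoint_algebraMap h,
    algebraMap_frobeniusAddNum, ← baseChange_addXNum, map_pow, map_pow, evalPoint_coordX,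
    evalPoint_coordY, ← map_pow, FiniteField.pow_card, addXNum_self]

lemma algebraMap_eval_frobeniusSubNum {L : Type*} [Field L] [Algebra F L] {x : F} {y : L}
    (h : (W⁄L).toAffine.Equation (algebraMap F L x) y) :
    algebraMap F L ((frobeniusSubNum W).eval x) =
      (y ^ Fintype.card F - (W⁄L).toAffine.negY (algebraMap F L x) y) ^ 2 := by
  rw [← aeval_algebraMap_apply_eq_algebraMap_eval, ← evalPoint_algebraMap h,
    algebraMap_frobeniusSubNum, ← baseChange_addXNum, ← Affine.baseChange_negY, map_pow, map_pow,
    evalPoint_coordX, evalPoint_coordY, ← map_pow, FiniteField.pow_card, addXNum_self]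

end Numerators

section Polynomials

variable {F : Type*} [Field F]

lemma natDegree_le_of_add_of_mul {a b : F[X]} {d : ℕ} (hadd : (a + b).natDegree ≤ d)
    (hmul : (a * b).natDegree ≤ 2 * d) : a.natDegree ≤ d := by
  by_contra! ha
  have hb : d < b.natDegree := by
    by_contra! hb
    refine ha.not_ge ?_
    rw [← add_sub_cancel_right a b]
    exact (natDegree_sub_le_of_le hadd hb).trans_eq (max_self d)
  rw [natDegree_mul (ne_zero_of_natDegree_gt ha) (ne_zero_of_natDegree_gt hb)] at hmul
  omega

lemma X_sub_C_pow_dvd_of_dvd_mul {p m : F[X]} {a : F} {n : ℕ} (h : (X - C a) ^ n ∣ p * m)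
    (hp : p.eval a ≠ 0) : (X - C a) ^ n ∣ m := by
  refine IsCoprime.dvd_of_dvd_mul_left (IsCoprime.pow_left ?_) h
  rwa [(irreducible_X_sub_C a).coprime_iff_not_dvd, dvd_iff_isRoot]

lemma prod_X_sub_C [Fintype F] : ∏ a : F, (X - C a) = X ^ Fintype.card F - X := by
  have hq : 1 < Fintype.card F := Fintype.one_lt_card
  have hroots := FiniteField.roots_X_pow_card_sub_X F
  have hmonic : (X ^ Fintype.card F - X : F[X]).Monic :=
    monic_X_pow_sub (by rw [degree_X]; exact_mod_cast hq)
  have hcard : (X ^ Fintype.card F - X : F[X]).roots.card =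
      (X ^ Fintype.card F - X : F[X]).natDegree := by
    rw [hroots, FiniteField.X_pow_card_sub_X_natDegree_eq _ hq]
    rfl
  have := prod_multiset_X_sub_C_of_monic_of_roots_card_eq hmonic hcard
  rwa [hroots] at this

lemma exists_algebraMap_eq_of_pow_card_eq [Fintype F] {L : Type*} [Field L] [Algebra F L] {y : L}
    (hy : y ^ Fintype.card F = y) : ∃ a : F, algebraMap F L a = y := by
  have h := congrArg (aeval y) (prod_X_sub_C (F := F))
  simp only [map_prod, map_sub, map_pow, aeval_X, aeval_C, hy, sub_self] at h
  obtain ⟨a, -, ha⟩ := Finset.prod_eq_zero_iff.mp h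
  exact ⟨a, (sub_eq_zero.mp ha).symm⟩

end Polynomials

section FiberCard

variable {F : Type*} [Field F] (W : WeierstrassCurve F)

/-- The number of rational points of `W` with given `x`-coordinate. -/
noncomputable def fiberCard (x : F) : ℕ :=
  {y | W.toAffine.Equation x y}.ncard

variable {W}

lemma setOf_equation_eq {x y : F} (h : W.toAffine.Equation x y) :
    {y | W.toAffine.Equation x y} = {y, W.toAffine.negY x y} := by
  ext z
  constructor
  · exact fun hz => Affine.Y_eq_of_X_eq hz h rfl
  · rintro (rfl | rfl)
    · exact h
    · exact (Affine.equation_neg ..).mpr h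

lemma fiberCard_eq_zero {x : F} (hx : ∀ y, ¬W.toAffine.Equation x y) : fiberCard W x = 0 := by
  simp [fiberCard, hx]

lemma fiberCard_eq_one {x y : F} (h : W.toAffine.Equation x y) (hy : y = W.toAffine.negY x y) :
    fiberCard W x = 1 := by
  rw [fiberCard, setOf_equation_eq h, ← hy, Set.pair_eq_singleton, Set.ncard_singleton]

lemma fiberCard_eq_two {x y : F} (h : W.toAffine.Equation x y) (hy : y ≠ W.toAffine.negY x y) :
    fiberCard W x = 2 := by
  rw [fiberCard, setOf_equation_eq h, Set.ncard_pair hy]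

variable (W) in
lemma fiberCard_le_two (x : F) : fiberCard W x ≤ 2 := by
  by_cases! hx : ∃ y, W.toAffine.Equation x y
  · obtain ⟨y, h⟩ := hx
    rw [fiberCard, setOf_equation_eq h]
    exact (Set.ncard_insert_le ..).trans_eq (by rw [Set.ncard_singleton])
  · exact (fiberCard_eq_zero hx).trans_le zero_le_two

variable (W) in
lemma exists_equation [IsAlgClosed F] (x : F) : ∃ y, W.toAffine.Equation x y := by
  obtain ⟨y, hy⟩ := IsAlgClosed.exists_root
    (X ^ 2 + C (W.a₁ * x + W.a₃) * X - C (x ^ 3 + W.a₂ * x ^ 2 + W.a₄ * x + W.a₆)) (by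
      rw [show degree _ = 2 by compute_degree!]; decide)
  refine ⟨y, (Affine.equation_iff' ..).mpr ?_⟩
  simp only [IsRoot, eval_add, eval_sub, eval_mul, eval_pow, eval_X, eval_C] at hy
  linear_combination hy

lemma natCard_point [Fintype F] [W.IsElliptic] :
    Nat.card W.toAffine.Point = 1 + ∑ x, fiberCard W x := by
  rw [Nat.card_congr (β := Option _) (Affine.pointEquiv W.toAffine), Finite.card_option, add_comm,
    Nat.card_congr (show {xy : F × F // W.toAffine.Equation xy.1 xy.2} ≃
        (x : F) × {y : F // W.toAffine.Equation x y} from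
      ⟨fun z => ⟨z.1.1, z.1.2, z.2⟩, fun z => ⟨(z.1, z.2.1), z.2.2⟩, fun _ => rfl, fun _ => rfl⟩),
    Nat.card_sigma]
  rfl

end FiberCard

section Divisibility

variable {F : Type*} [Field F] [Fintype F] (W : WeierstrassCurve F) [W.IsElliptic] (x : F)

lemma sq_dvd_frobeniusAddNum_mul_frobeniusSubNum :
    (X - C x) ^ 2 ∣ frobeniusAddNum W * frobeniusSubNum W := by
  rw [frobeniusAddNum_mul_frobeniusSubNum, ← prod_X_sub_C]
  have hdvd : X - C x ∣ ∏ a : F, (X - C a) := Finset.dvd_prod_of_mem _ (Finset.mem_univ x)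
  exact Dvd.dvd.mul_right (pow_dvd_pow_of_dvd hdvd 2) _

variable {W x}

lemma sq_dvd_frobeniusSubNum (hx : ∀ y, ¬W.toAffine.Equation x y) :
    (X - C x) ^ 2 ∣ frobeniusSubNum W := by
  refine X_sub_C_pow_dvd_of_dvd_mul (sq_dvd_frobeniusAddNum_mul_frobeniusSubNum W x) fun h₀ => ?_
  obtain ⟨y, hy⟩ := exists_equation (W⁄(AlgebraicClosure F)) (algebraMap F _ x)
  have hpow := algebraMap_eval_frobeniusAddNum hy
  rw [h₀, map_zero, eq_comm, sq_eq_zero_iff, sub_eq_zero] at hpow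
  obtain ⟨z, hz⟩ := exists_algebraMap_eq_of_pow_card_eq hpow
  rw [← hz] at hy
  exact hx z ((W.toAffine.map_equation (algebraMap F _).injective x z).mp hy)

lemma eval_frobeniusAddNum {y : F} (h : W.toAffine.Equation x y) :
    (frobeniusAddNum W).eval x = 0 :=
  (algebraMap_eval_frobeniusAddNum (W := W) (L := F) h).trans
    (by rw [FiniteField.pow_card, sub_self, sq, zero_mul])

lemma eval_frobeniusSubNum {y : F} (h : W.toAffine.Equation x y) :
    (frobeniusSubNum W).eval x = (y - W.toAffine.negY x y) ^ 2 :=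
  (algebraMap_eval_frobeniusSubNum (W := W) (L := F) h).trans (by rw [FiniteField.pow_card]; rfl)

variable (W x)

lemma pow_fiberCard_dvd_frobeniusAddNum : (X - C x) ^ fiberCard W x ∣ frobeniusAddNum W := by
  by_cases! hx : ∃ y, W.toAffine.Equation x y
  · obtain ⟨y, h⟩ := hx
    by_cases hy : y = W.toAffine.negY x y
    · rw [fiberCard_eq_one h hy, pow_one, dvd_iff_isRoot]
      exact eval_frobeniusAddNum h
    · rw [fiberCard_eq_two h hy]
      refine X_sub_C_pow_dvd_of_dvd_mul (p := frobeniusSubNum W) ?_ ?_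
      · rw [mul_comm]
        exact sq_dvd_frobeniusAddNum_mul_frobeniusSubNum W x
      · rw [eval_frobeniusSubNum h]
        exact pow_ne_zero 2 (sub_ne_zero.mpr hy)
  · rw [fiberCard_eq_zero hx, pow_zero]
    exact one_dvd _

lemma pow_two_sub_fiberCard_dvd_frobeniusSubNum :
    (X - C x) ^ (2 - fiberCard W x) ∣ frobeniusSubNum W := by
  by_cases! hx : ∃ y, W.toAffine.Equation x y
  · obtain ⟨y, h⟩ := hx
    by_cases hy : y = W.toAffine.negY x y
    · rw [fiberCard_eq_one h hy, pow_one, dvd_iff_isRoot, IsRoot, eval_frobeniusSubNum h, ← hy,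
        sub_self, sq, zero_mul]
    · rw [fiberCard_eq_two h hy, pow_zero]
      exact one_dvd _
  · rw [fiberCard_eq_zero hx]
    exact sq_dvd_frobeniusSubNum hx

end Divisibility

section HeightBounds

variable {F : Type*} [Field F] [Fintype F]

lemma sum_add_sum_two_sub {ι : Type*} [Fintype ι] {k : ι → ℕ} (hk : ∀ i, k i ≤ 2) :
    ∑ i, k i + ∑ i, (2 - k i) = 2 * Fintype.card ι := by
  rw [← Finset.sum_add_distrib, Finset.sum_congr rfl fun i _ => Nat.add_sub_of_le (hk i)]
  simp [mul_comm]

lemma monic_prod_X_sub_C_pow (k : F → ℕ) : (∏ c, (X - C c) ^ k c).Monic :=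
  monic_prod_of_monic _ _ fun c _ => (monic_X_sub_C c).pow (k c)

lemma natDegree_prod_X_sub_C_pow (k : F → ℕ) :
    (∏ c, (X - C c) ^ k c).natDegree = ∑ c, k c := by
  rw [natDegree_prod_of_monic _ _ fun c _ => (monic_X_sub_C c).pow (k c)]
  simp

lemma height_le_of_pow_dvd {K : Type*} [Field K] [Algebra F[X] K] [FaithfulSMul F[X] K] {z : K}
    {a : F[X]} {k : F → ℕ}
    (hz : z * algebraMap F[X] K ((X ^ Fintype.card F - X) ^ 2) = algebraMap F[X] K a)
    (ha : a.natDegree ≤ 2 * Fintype.card F + 1) (hk : ∀ c, k c ≤ 2)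
    (hdvd : ∀ c, (X - C c) ^ k c ∣ a) : height F ![z, 1] ≤ 1 + ∑ c, (2 - k c) := by
  set g := ∏ c, (X - C c) ^ k c
  set n := ∏ c, (X - C c) ^ (2 - k c)
  have hg : g.Monic := monic_prod_X_sub_C_pow k
  have hgn : (X ^ Fintype.card F - X) ^ 2 = g * n := by
    rw [← prod_X_sub_C, ← Finset.prod_pow, ← Finset.prod_mul_distrib]
    exact Finset.prod_congr rfl fun c _ => by rw [← pow_add, Nat.add_sub_of_le (hk c)]
  have hdeg : ∑ c, k c + ∑ c, (2 - k c) = 2 * Fintype.card F := sum_add_sum_two_sub hk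
  obtain ⟨f, rfl⟩ : g ∣ a := Finset.prod_dvd_of_coprime
    (fun c _ d _ hcd => (pairwise_coprime_X_sub_C Function.injective_id hcd).pow) fun c _ => hdvd c
  have hrep : Represents ![f, n] ![z, 1] := by
    refine represents_of_mul_eq (monic_prod_X_sub_C_pow _).ne_zero ?_
    have hg₀ : algebraMap F[X] K g ≠ 0 := by
      rw [Ne, FaithfulSMul.algebraMap_eq_zero_iff]
      exact hg.ne_zero
    rw [hgn, map_mul, map_mul] at hz
    exact mul_left_cancel₀ hg₀ (by rw [← hz]; ring)
  refine (height_le hrep).trans (vecDegree_le fun i => ?_)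
  fin_cases i
  · change f.natDegree ≤ _
    rcases eq_or_ne f 0 with rfl | hf
    · simp
    · rw [hg.natDegree_mul' hf, natDegree_prod_X_sub_C_pow] at ha
      omega
  · exact (natDegree_prod_X_sub_C_pow _).trans_le (Nat.le_add_left ..)

variable (W : WeierstrassCurve F) [W.IsElliptic]

lemma natDegree_frobeniusAddNum_le :
    (frobeniusAddNum W).natDegree ≤ 2 * Fintype.card F + 1 :=
  natDegree_le_of_add_of_mul (natDegree_frobeniusAddNum_add_frobeniusSubNum_le W)
    (natDegree_frobeniusAddNum_mul_frobeniusSubNum_le W)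

lemma natDegree_frobeniusSubNum_le :
    (frobeniusSubNum W).natDegree ≤ 2 * Fintype.card F + 1 :=
  natDegree_le_of_add_of_mul
    (add_comm (frobeniusAddNum W) _ ▸ natDegree_frobeniusAddNum_add_frobeniusSubNum_le W)
    (mul_comm (frobeniusAddNum W) _ ▸ natDegree_frobeniusAddNum_mul_frobeniusSubNum_le W)

variable {W} in
lemma exists_xRep_frobeniusPoint_add_some {y : W.toAffine.CoordinateRing}
    (h : (W⁄W.toAffine.FunctionField).toAffine.Nonsingular (algebraMap _ _ (coordX W))
      (algebraMap _ _ y)) {p : F[X]}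
    (hp : algebraMap F[X] _ p = addXNum (W⁄W.toAffine.CoordinateRing).toAffine
      (coordX W ^ Fintype.card F) (coordY W ^ Fintype.card F) (coordX W) y) :
    ∃ z, z * algebraMap F[X] _ ((X ^ Fintype.card F - X) ^ 2) = algebraMap F[X] _ p ∧
      (frobeniusPoint W + .some _ _ h).xRep = ![z, 1] := by
  set φ := IsScalarTower.toAlgHom F W.toAffine.CoordinateRing W.toAffine.FunctionField
  have hX (f : F[X]) : algebraMap F[X] W.toAffine.FunctionField f = φ (algebraMap F[X] _ f) :=
    IsScalarTower.algebraMap_apply ..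
  have hsub : algebraMap F[X] _ (X ^ Fintype.card F - X) =
      φ (coordX W ^ Fintype.card F) - φ (coordX W) := by
    rw [hX, map_sub, map_sub, map_pow]
    rfl
  have hne : φ (coordX W ^ Fintype.card F) ≠ φ (coordX W) := by
    rw [← sub_ne_zero, ← hsub, Ne, FaithfulSMul.algebraMap_eq_zero_iff]
    exact FiniteField.X_pow_card_sub_X_ne_zero F Fintype.one_lt_card
  obtain ⟨hQ, heq⟩ : ∃ hQ, frobeniusPoint W =
      .some (φ (coordX W ^ Fintype.card F)) (φ (coordY W ^ Fintype.card F)) hQ := by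
    rw [map_pow, map_pow]
    exact ⟨_, rfl⟩
  rw [heq]
  refine ⟨_, ?_, congrArg Affine.Point.xRep (Affine.Point.add_of_X_ne hne)⟩
  rw [hX p, hp, ← baseChange_addXNum, ← addX_slope_mul_sq hne, map_pow (algebraMap _ _), hsub]
  rfl

lemma height_frobeniusPoint_add_genericPoint_le :
    height F (frobeniusPoint W + genericPoint W).xRep ≤ 1 + ∑ x, (2 - fiberCard W x) := by
  obtain ⟨z, hz, hrep⟩ := exists_xRep_frobeniusPoint_add_some (nonsingular_generic W)
    (algebraMap_frobeniusAddNum W)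
  rw [genericPoint, hrep]
  exact height_le_of_pow_dvd hz (natDegree_frobeniusAddNum_le W)
    (fiberCard_le_two W) (pow_fiberCard_dvd_frobeniusAddNum W)

lemma height_frobeniusPoint_sub_genericPoint_le :
    height F (frobeniusPoint W - genericPoint W).xRep ≤ 1 + ∑ x, fiberCard W x := by
  obtain ⟨h, hneg⟩ := neg_genericPoint W
  obtain ⟨z, hz, hrep⟩ := exists_xRep_frobeniusPoint_add_some h (algebraMap_frobeniusSubNum W)
  rw [sub_eq_add_neg, hneg, hrep]
  refine (height_le_of_pow_dvd hz (natDegree_frobeniusSubNum_le W)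
    (fun _ => Nat.sub_le 2 _) (pow_two_sub_fiberCard_dvd_frobeniusSubNum W)).trans_eq ?_
  exact congrArg (1 + ·) <|
    Finset.sum_congr rfl fun x _ => Nat.sub_sub_self (fiberCard_le_two W x)

lemma height_frobeniusPoint_sub_genericPoint :
    height F (frobeniusPoint W - genericPoint W).xRep = Nat.card W.toAffine.Point := by
  have hpar := height_add_height_sub_of_mem_antiInvariant
    (frobeniusPoint_mem_antiInvariant W) (genericPoint_mem_antiInvariant W)
  rw [height_genericPoint, height_frobeniusPoint] at hpar
  have hadd := height_frobeniusPoint_add_genericPoint_le W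
  have hsub := height_frobeniusPoint_sub_genericPoint_le W
  have hsum := sum_add_sum_two_sub (fiberCard_le_two W)
  rw [natCard_point]
  omega

end HeightBounds

theorem sq_card_point_sub_card_sub_one_le {F : Type*} [Field F] [Fintype F] (W : WeierstrassCurve F)
    [W.IsElliptic] :
    ((Nat.card W.toAffine.Point : ℤ) - Fintype.card F - 1) ^ 2 ≤ 4 * Fintype.card F := by
  let h : antiInvariant W → ℤ := fun P => height F P.1.xRep
  have hpar (P Q) : h (P + Q) + h (P - Q) = 2 * (h P + h Q) := by
    simp only [h]
    exact_mod_cast height_add_height_sub_of_mem_antiInvariant P.2 Q.2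
  have hsq := sq_le_of_parallelogram hpar (fun _ => Int.natCast_nonneg _)
    ⟨_, frobeniusPoint_mem_antiInvariant W⟩ (-⟨_, genericPoint_mem_antiInvariant W⟩)
  rw [← sub_eq_add_neg] at hsq
  simpa only [h, AddSubgroup.coe_sub, AddSubgroup.coe_neg, Affine.Point.xRep_neg,
    height_frobeniusPoint_sub_genericPoint, height_frobeniusPoint, height_genericPoint,
    Nat.cast_one, mul_one] using hsq

end HasseWeil

/-- **Hasse bound / Riemann hypothesis for elliptic curves over finite fields.**
Let `F` be a finite field with `q` elements and `W` a Weierstrass curve over `F`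
with nonzero discriminant.  If `N` is the number of `F`-rational points of `W`
(affine points together with the point at infinity), then `|N - q - 1| ≤ 2√q`. -/
theorem hasse_bound (F : Type*) [Field F] [Fintype F] (W : WeierstrassCurve F)
    (hΔ : W.Δ ≠ 0) (N : ℕ) (hN : N = Nat.card W.toAffine.Point) :
    |(N : ℝ) - (Fintype.card F : ℝ) - 1| ≤ 2 * Real.sqrt (Fintype.card F) := by
  have : W.IsElliptic := ⟨hΔ.isUnit⟩
  have hsq : ((N : ℝ) - Fintype.card F - 1) ^ 2 ≤ 4 * Fintype.card F := by
    rw [hN]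
    exact_mod_cast HasseWeil.sq_card_point_sub_card_sub_one_le W
  refine abs_le_of_sq_le_sq ?_ (by positivity)
  rw [mul_pow, Real.sq_sqrt (Nat.cast_nonneg _)]
  norm_num [hsq]
end

section
/- Let f be a formal power series in one variable with integer coefficients. Suppose that in ℚ[[T]] one has f·R = P, where P and R are coprime polynomials with rational coefficients and R has constant term 1. Then all coefficients of P and of R are integers. -/
/-!
A prime of a factorial domain `D` stays prime in `D⟦X⟧`, so the only divisors in `D⟦X⟧` of a
nonzero constant are, up to units, constants; equivalently, every divisor `H` of a nonzero constant
is divisible by its own constant coefficient. Now let `f R = P` with `U P + V R = 1`. Then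
`(U f + V) R = 1`, and clearing denominators turns this into a factorization of a nonzero constant
over `D`, in which `R` has become `H = d R`. The constant coefficient of `H` is `d`, hence `d ∣ H`
and `R = H / d` has coefficients in `D`; so does `P = f R`.
-/

open Polynomial PowerSeries

theorem powerSeries_C_dvd_iff_dvd_coeff {D : Type*} [CommSemiring D] {a : D} {G : D⟦X⟧} :
    PowerSeries.C a ∣ G ↔ ∀ n, a ∣ PowerSeries.coeff n G := by
  constructor
  · rintro ⟨H, rfl⟩ n
    simp
  · intro h
    choose c hc using h
    exact ⟨PowerSeries.mk c, PowerSeries.ext fun n ↦ by simp [hc]⟩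

section Divisibility

variable {D : Type*} [CommRing D]

theorem powerSeries_C_dvd_iff_map_quotient_eq_zero {a : D} {G : D⟦X⟧} :
    PowerSeries.C a ∣ G ↔ PowerSeries.map (Ideal.Quotient.mk (Ideal.span {a})) G = 0 := by
  simp [powerSeries_C_dvd_iff_dvd_coeff, PowerSeries.ext_iff, Ideal.Quotient.eq_zero_iff_dvd]

theorem prime_powerSeries_C {p : D} (hp : Prime p) : Prime (PowerSeries.C p : D⟦X⟧) := by
  have : (Ideal.span {p}).IsPrime := (Ideal.span_singleton_prime hp.ne_zero).2 hp
  refine ⟨(map_ne_zero_iff _ PowerSeries.C_injective).2 hp.ne_zero,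
    fun h ↦ hp.not_isUnit ?_, fun G H h ↦ ?_⟩
  · simpa using h.map PowerSeries.constantCoeff
  · simpa only [powerSeries_C_dvd_iff_map_quotient_eq_zero, map_mul, mul_eq_zero] using h

variable [UniqueFactorizationMonoid D]

theorem exists_associated_powerSeries_C_of_dvd {N : D} (hN : N ≠ 0) {G : D⟦X⟧}
    (hG : G ∣ PowerSeries.C N) : ∃ a, Associated G (PowerSeries.C a) := by
  induction N using UniqueFactorizationMonoid.induction_on_prime generalizing G with
  | h₁ => exact absurd rfl hN
  | h₂ N hN_unit =>
    have hG_unit : IsUnit G := isUnit_of_dvd_unit hG (hN_unit.map PowerSeries.C)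
    exact ⟨1, by simpa [associated_one_iff_isUnit] using hG_unit⟩
  | h₃ N p hN' hp ih =>
    rw [map_mul] at hG
    rcases (prime_powerSeries_C hp).left_dvd_or_dvd_right_of_dvd_mul hG with ⟨G', rfl⟩ | hGN
    · obtain ⟨a, ha⟩ :=
        ih hN' ((mul_dvd_mul_iff_left (prime_powerSeries_C hp).ne_zero).1 hG)
      exact ⟨p * a, by simpa only [map_mul] using ha.mul_left (PowerSeries.C p)⟩
    · exact ih hN' hGN

theorem powerSeries_C_constantCoeff_dvd_of_dvd {N : D} (hN : N ≠ 0) {H : D⟦X⟧}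
    (hH : H ∣ PowerSeries.C N) : PowerSeries.C (PowerSeries.constantCoeff H) ∣ H := by
  obtain ⟨a, ha⟩ := exists_associated_powerSeries_C_of_dvd hN hH
  have ha₀ : Associated (PowerSeries.constantCoeff H) a := by
    simpa using ha.map PowerSeries.constantCoeff
  exact ((ha₀.map PowerSeries.C).trans ha.symm).dvd

end Divisibility

section FractionField

variable {D K : Type*} [CommRing D] [IsDomain D] [Field K] [Algebra D K] [IsFractionRing D K]

theorem exists_map_coe_eq_C_mul (p : K[X]) : ∃ b : D, b ≠ 0 ∧ ∃ q : D[X],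
    PowerSeries.map (algebraMap D K) q = PowerSeries.C (algebraMap D K b) * (p : K⟦X⟧) := by
  obtain ⟨b, hb, hq⟩ := IsLocalization.integerNormalization_spec (nonZeroDivisors D) p
  refine ⟨b, nonZeroDivisors.ne_zero hb,
    IsLocalization.integerNormalization (nonZeroDivisors D) p, ?_⟩
  rw [← Polynomial.polynomial_map_coe, hq, algebra_compatible_smul K b p,
    Polynomial.smul_eq_C_mul, Polynomial.coe_mul, Polynomial.coe_C]

theorem exists_map_mul_eq_C_of_isCoprime {f : D⟦X⟧} {P R : K[X]} (hcop : IsCoprime P R)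
    (h : PowerSeries.map (algebraMap D K) f * (R : K⟦X⟧) = P) :
    ∃ b : D, b ≠ 0 ∧ ∃ g : D⟦X⟧,
      PowerSeries.map (algebraMap D K) g * (R : K⟦X⟧) = PowerSeries.C (algebraMap D K b) := by
  obtain ⟨U, V, hUV⟩ := hcop
  obtain ⟨a, ha, u, hu⟩ := exists_map_coe_eq_C_mul (D := D) U
  obtain ⟨b, hb, v, hv⟩ := exists_map_coe_eq_C_mul (D := D) V
  have bezout : (U * P + V * R : K⟦X⟧) = 1 := mod_cast congrArg Polynomial.toPowerSeries hUV
  refine ⟨a * b, mul_ne_zero ha hb, PowerSeries.C b * u * f + PowerSeries.C a * v, ?_⟩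
  simp only [map_add, map_mul, PowerSeries.map_C, hu, hv]
  linear_combination
    PowerSeries.C (algebraMap D K a) * PowerSeries.C (algebraMap D K b) * (U * h + bezout)

theorem mem_lifts_of_map_mul_eq_C [UniqueFactorizationMonoid D] {R : K[X]} (hR0 : R.coeff 0 = 1)
    {g : D⟦X⟧} {b : D} (hb : b ≠ 0)
    (h : PowerSeries.map (algebraMap D K) g * (R : K⟦X⟧) = PowerSeries.C (algebraMap D K b)) :
    R ∈ Polynomial.lifts (algebraMap D K) := by
  have inj : Function.Injective (algebraMap D K) := IsFractionRing.injective D K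
  obtain ⟨d, hd, H, hH⟩ := exists_map_coe_eq_C_mul (D := D) R
  have coeff_H (n : ℕ) : algebraMap D K (H.coeff n) = algebraMap D K d * R.coeff n := by
    simpa using congrArg (PowerSeries.coeff n) hH
  have H_dvd : (H : D⟦X⟧) ∣ PowerSeries.C (d * b) := by
    refine ⟨g, PowerSeries.map_injective _ inj ?_⟩
    simp only [map_mul, PowerSeries.map_C, hH]
    linear_combination -PowerSeries.C (algebraMap D K d) * h
  have constantCoeff_H : PowerSeries.constantCoeff (H : D⟦X⟧) = d :=
    inj (by simpa [hR0] using coeff_H 0)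
  have d_dvd : PowerSeries.C d ∣ (H : D⟦X⟧) := by
    simpa only [constantCoeff_H] using
      powerSeries_C_constantCoeff_dvd_of_dvd (mul_ne_zero hd hb) H_dvd
  refine (Polynomial.lifts_iff_coeff_lifts R).2 fun n ↦ ?_
  obtain ⟨c, hc⟩ := powerSeries_C_dvd_iff_dvd_coeff.1 d_dvd n
  refine ⟨c, mul_left_cancel₀ ((map_ne_zero_iff _ inj).2 hd) ?_⟩
  rw [← coeff_H, ← map_mul, ← hc, Polynomial.coeff_coe]

end FractionField

theorem mem_lifts_of_map_mul_eq {A B : Type*} [CommSemiring A] [CommSemiring B] {φ : A →+* B}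
    {f : A⟦X⟧} {P R : B[X]} (hR : R ∈ Polynomial.lifts φ)
    (h : PowerSeries.map φ f * (R : B⟦X⟧) = P) : P ∈ Polynomial.lifts φ := by
  obtain ⟨R', rfl⟩ := (Polynomial.mem_lifts R).1 hR
  rw [Polynomial.polynomial_map_coe, ← map_mul] at h
  refine (Polynomial.lifts_iff_coeff_lifts P).2 fun n ↦ ⟨PowerSeries.coeff n (f * R'), ?_⟩
  rw [← PowerSeries.coeff_map, h, Polynomial.coeff_coe]

theorem coeffs_integral_of_int_powerSeries_general {D K : Type*} [CommRing D] [IsDomain D]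
    [UniqueFactorizationMonoid D] [Field K] [Algebra D K] [IsFractionRing D K]
    (f : D⟦X⟧) (P R : K[X]) (hcop : IsCoprime P R) (hR0 : R.coeff 0 = 1)
    (h : PowerSeries.map (algebraMap D K) f * (R : K⟦X⟧) = P) :
    P ∈ Polynomial.lifts (algebraMap D K) ∧ R ∈ Polynomial.lifts (algebraMap D K) := by
  obtain ⟨b, hb, g, hg⟩ := exists_map_mul_eq_C_of_isCoprime hcop h
  have hR : R ∈ Polynomial.lifts (algebraMap D K) := mem_lifts_of_map_mul_eq_C hR0 hb hg
  exact ⟨mem_lifts_of_map_mul_eq hR h, hR⟩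

/-- If a formal power series `f` with integer coefficients satisfies `f·R = P` in `ℚ[[T]]`
with `P, R` coprime polynomials over `ℚ` and `R` having constant term `1`, then all
coefficients of `P` and of `R` are integers. -/
theorem coeffs_integral_of_int_powerSeries (f : PowerSeries ℤ) (P R : Polynomial ℚ)
    (hcop : IsCoprime P R) (hR0 : R.coeff 0 = 1)
    (h : PowerSeries.map (Int.castRingHom ℚ) f * (R : PowerSeries ℚ) = (P : PowerSeries ℚ)) :
    (∀ n, ∃ z : ℤ, P.coeff n = (z : ℚ)) ∧ (∀ n, ∃ z : ℤ, R.coeff n = (z : ℚ)) := by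
  simpa [Polynomial.lifts_iff_coeff_lifts, eq_comm] using
    coeffs_integral_of_int_powerSeries_general f P R hcop hR0 h
end

section
/- Let K ⊆ L be an extension of fields and let f be a formal power series with coefficients in K. If there exist polynomials P, R with coefficients in L such that R ≠ 0 and f·R = P in L[[T]], then there exist polynomials p, r with coefficients in K such that r ≠ 0 and f·r = p in K[[T]]. -/
/-! A `K`-linear functional `φ : L → K`, applied coefficientwise to the identity `f * R = P`, yields
an identity of the same shape over `K`, because the coefficients of `f` are scalars for `φ`. It
remains to choose `φ` nonzero on some coefficient of `R`, so that the denominator survives. -/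

open scoped Polynomial PowerSeries

section MapCoeffs

variable {K A B : Type*} [CommSemiring K] [Semiring A] [Algebra K A] [Semiring B] [Algebra K B]

/-- The `K`-linear map `A[X] → B[X]` applying a `K`-linear map `A → B` to each coefficient. Unlike
`Polynomial.map`, it does not require the map on coefficients to be multiplicative. -/
noncomputable def mapCoeffs (φ : A →ₗ[K] B) : A[X] →ₗ[K] B[X] :=
  Polynomial.lsum fun n ↦ (Polynomial.monomial n).restrictScalars K ∘ₗ φ

theorem coeff_mapCoeffs (φ : A →ₗ[K] B) (Q : A[X]) (n : ℕ) :
    (mapCoeffs φ Q).coeff n = φ (Q.coeff n) := by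
  simp +contextual [mapCoeffs, Polynomial.lsum_apply, Polynomial.sum_def,
    Polynomial.coeff_monomial]

theorem exists_dual_mapCoeffs_ne_zero [Module.Projective K A] {Q : A[X]} (hQ : Q ≠ 0) :
    ∃ φ : Module.Dual K A, mapCoeffs φ Q ≠ 0 := by
  obtain ⟨φ, hφ⟩ :=
    Module.Projective.exists_dual_ne_zero K (Polynomial.leadingCoeff_ne_zero.mpr hQ)
  refine ⟨φ, fun h ↦ hφ ?_⟩
  rw [Polynomial.leadingCoeff, ← coeff_mapCoeffs, h, Polynomial.coeff_zero]

theorem coeff_map_algebraMap_mul_mapCoeffs (φ : A →ₗ[K] B) (f : K⟦X⟧) (Q : A[X]) (n : ℕ) :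
    PowerSeries.coeff n (PowerSeries.map (algebraMap K B) f * (mapCoeffs φ Q : B⟦X⟧)) =
      φ (PowerSeries.coeff n (PowerSeries.map (algebraMap K A) f * (Q : A⟦X⟧))) := by
  simp only [PowerSeries.coeff_mul, PowerSeries.coeff_map, Polynomial.coeff_coe, coeff_mapCoeffs,
    ← Algebra.smul_def, map_sum, map_smul]

theorem map_algebraMap_mul_mapCoeffs_eq (φ : A →ₗ[K] B) {f : K⟦X⟧} {P R : A[X]}
    (h : PowerSeries.map (algebraMap K A) f * (R : A⟦X⟧) = (P : A⟦X⟧)) :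
    PowerSeries.map (algebraMap K B) f * (mapCoeffs φ R : B⟦X⟧) = (mapCoeffs φ P : B⟦X⟧) := by
  ext n
  rw [coeff_map_algebraMap_mul_mapCoeffs, h, Polynomial.coeff_coe, Polynomial.coeff_coe,
    coeff_mapCoeffs]

end MapCoeffs

theorem rational_descends_general (K L : Type*) [CommSemiring K] [Semiring L] [Algebra K L]
    [Module.Projective K L] (f : PowerSeries K) (P R : Polynomial L) (hR : R ≠ 0)
    (h : PowerSeries.map (algebraMap K L) f * (R : PowerSeries L) = (P : PowerSeries L)) :
    ∃ (p r : Polynomial K), r ≠ 0 ∧ f * (r : PowerSeries K) = (p : PowerSeries K) := by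
  obtain ⟨φ, hφ⟩ := exists_dual_mapCoeffs_ne_zero (K := K) hR
  refine ⟨mapCoeffs φ P, mapCoeffs φ R, hφ, ?_⟩
  simpa only [Algebra.algebraMap_self, PowerSeries.map_id, id_eq] using
    map_algebraMap_mul_mapCoeffs_eq φ h

/-- If a formal power series with coefficients in a field `K` becomes rational over a
field extension `L` of `K`, then it is already rational over `K`. -/
theorem rational_descends (K L : Type*) [Field K] [Field L] [Algebra K L]
    (f : PowerSeries K) (P R : Polynomial L) (hR : R ≠ 0)
    (h : PowerSeries.map (algebraMap K L) f * (R : PowerSeries L) = (P : PowerSeries L)) :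
    ∃ (p r : Polynomial K), r ≠ 0 ∧ f * (r : PowerSeries K) = (p : PowerSeries K) :=
  rational_descends_general K L f P R hR h
end

section
/- Let E be a finite-dimensional associative unital algebra over ℚ equipped with a positive involution †. Then E is a semisimple ring. -/
/-!
An Artinian ring is semisimple once its Jacobson radical vanishes, and this radical is a nilpotent
two-sided ideal. If it contained some `x ≠ 0`, it would also contain `x * x†`, which would then be
nilpotent and so have trace zero, contradicting positivity.
-/

theorem isNilpotent_of_mem_of_isNilpotent {A : Type*} [Semiring A] {I : Ideal A}
    (hI : IsNilpotent I) {x : A} (hx : x ∈ I) : IsNilpotent x := by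
  obtain ⟨n, hn⟩ := hI
  have hxn : x ^ n ∈ I ^ n := Ideal.pow_mem_pow hx n
  exact ⟨n, by rwa [hn] at hxn⟩

theorem isSemisimpleRing_of_forall_exists_not_isNilpotent_mul {A : Type*} [Ring A]
    [IsArtinianRing A] (h : ∀ x : A, x ≠ 0 → ∃ y, ¬ IsNilpotent (x * y)) :
    IsSemisimpleRing A := by
  rw [IsArtinianRing.isSemisimpleRing_iff_jacobson, Submodule.eq_bot_iff]
  intro x hx
  by_contra hx₀
  obtain ⟨y, hxy⟩ := h x hx₀
  have hxy_mem : x * y ∈ Ring.jacobson A := Ideal.mul_mem_right y _ hx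
  exact hxy (isNilpotent_of_mem_of_isNilpotent IsSemiprimaryRing.isNilpotent hxy_mem)

theorem trace_mulLeft_eq_zero_of_isNilpotent (R : Type*) {A : Type*} [CommRing R] [IsReduced R]
    [Ring A] [Algebra R A] {a : A} (ha : IsNilpotent a) :
    LinearMap.trace R A (LinearMap.mulLeft R a) = 0 :=
  (LinearMap.isNilpotent_trace_of_isNilpotent
    ((LinearMap.isNilpotent_mulLeft_iff R a).mpr ha)).eq_zero

theorem semisimple_of_positive_involution_general (R A : Type*) [CommRing R] [IsReduced R]
    [Ring A] [IsArtinianRing A] [Algebra R A]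
    (h : ∀ x : A, x ≠ 0 → ∃ y, LinearMap.trace R A (LinearMap.mulLeft R (x * y)) ≠ 0) :
    IsSemisimpleRing A :=
  isSemisimpleRing_of_forall_exists_not_isNilpotent_mul fun x hx ↦
    (h x hx).imp fun _ htrace hnil ↦ htrace (trace_mulLeft_eq_zero_of_isNilpotent R hnil)

/-- A finite-dimensional associative unital `ℚ`-algebra carrying a positive involution
(`Tr(α·α†) > 0` for all `α ≠ 0`, where `Tr` is the trace of left multiplication) is
a semisimple ring. -/
theorem semisimple_of_positive_involution (E : Type*) [Ring E] [Algebra ℚ E]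
    [FiniteDimensional ℚ E] (dag : E → E)
    (hadd : ∀ x y, dag (x + y) = dag x + dag y)
    (hmul : ∀ x y, dag (x * y) = dag y * dag x)
    (hinv : ∀ x, dag (dag x) = x)
    (hpos : ∀ x : E, x ≠ 0 →
      0 < LinearMap.trace ℚ E (LinearMap.mulLeft ℚ (x * dag x))) :
    IsSemisimpleRing E :=
  have : IsArtinianRing E := .of_finite ℚ E
  semisimple_of_positive_involution_general ℚ E fun x hx ↦ ⟨dag x, (hpos x hx).ne'⟩
end

section
/- Let A be a finite-dimensional commutative ℝ-algebra and let † : A → A be an ℝ-linear ring homomorphism with †∘† = id, such that Tr(x·x†) > 0 for every nonzero x ∈ A, where Tr(x) denotes the trace of the ℝ-linear map y ↦ xy on A. Then every ℝ-algebra homomorphism ρ : A → ℂ satisfies ρ(x†) = conj(ρ(x)) for all x ∈ A, where conj denotes complex conjugation. -/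
/-!
Positivity of the trace enters only through the implication
`x * d x + y * d y = 0 → x = 0`. It makes `A` reduced, so every element of the minimal prime
`p = ker ρ` is annihilated by some `s ∉ p`. Multiplying by such annihilators shows first that `d`
preserves `p`, and then that the implication persists modulo `p`. Now `d` fixes the coefficients of
the real quadratic whose roots are `ρ x` and its conjugate, so `ρ (d x)` is one of these two roots.
If it is `ρ x`, then `n = x - Re (ρ x)` and `v = Im (ρ x)` satisfy
`ρ (n * d n + v * d v) = (v * I) ^ 2 + v ^ 2 = 0`, which forces `v = 0`.
-/

section MinimalPrimes

variable {R : Type*} [CommRing R] {p : Ideal R}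

theorem exists_notMem_mul_eq_zero_of_mem_minimalPrimes [IsReduced R] (hp : p ∈ minimalPrimes R)
    {x : R} (hx : x ∈ p) : ∃ s ∉ p, s * x = 0 := by
  have := hp.isPrime
  have : Ring.KrullDimLE 0 (Localization.AtPrime p) := .of_isLocalization _ hp _
  let : Field (Localization.AtPrime p) := Ring.KrullDimLE.isField_of_isReduced.toField
  have hx0 : algebraMap R (Localization.AtPrime p) x = 0 := by
    rw [← Ideal.mem_bot, ← IsLocalRing.maximalIdeal_eq_bot,
      ← Localization.AtPrime.map_eq_maximalIdeal]
    exact Ideal.mem_map_of_mem _ hx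
  obtain ⟨⟨s, hs⟩, hsx⟩ := (IsLocalization.map_eq_zero_iff p.primeCompl _ x).mp hx0
  exact ⟨s, hs, hsx⟩

theorem isReduced_of_mul_map_eq_zero {d : R →+* R} (hd : ∀ x, x * d x = 0 → x = 0) :
    IsReduced R := by
  refine (isReduced_iff_pow_one_lt 2 one_lt_two).mpr fun x hx ↦ hd x (hd _ ?_)
  calc x * d x * d (x * d x) = x * d (x ^ 2) * d (d x) := by simp only [map_mul, map_pow]; ring
    _ = 0 := by rw [hx, map_zero, mul_zero, zero_mul]

theorem comap_eq_of_mem_minimalPrimes {d : R →+* R} (hd : ∀ x, x * d x = 0 → x = 0)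
    (hp : p ∈ minimalPrimes R) : p.comap d = p := by
  have := isReduced_of_mul_map_eq_zero hd
  have := hp.isPrime
  have hle : p.comap d ≤ p := fun x hx ↦ by
    obtain ⟨s, hs, hsx⟩ := exists_notMem_mul_eq_zero_of_mem_minimalPrimes hp hx
    have hsx0 : s * x = 0 := hd _ <| by
      rw [map_mul]
      linear_combination x * d s * hsx
    exact (Ideal.IsPrime.mem_or_mem_of_mul_eq_zero ‹_› hsx0).resolve_left hs
  exact hle.antisymm (hp.2 ⟨Ideal.comap_isPrime d p, bot_le⟩ hle)

theorem mem_of_mul_map_add_mul_map_mem {d : R →+* R}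
    (hd : ∀ x y, x * d x + y * d y = 0 → x = 0) (hp : p ∈ minimalPrimes R) {x y : R}
    (hxy : x * d x + y * d y ∈ p) : x ∈ p := by
  have := isReduced_of_mul_map_eq_zero (d := d) fun x hx ↦ hd x 0 (by simpa using hx)
  obtain ⟨s, hs, hsxy⟩ := exists_notMem_mul_eq_zero_of_mem_minimalPrimes hp hxy
  have hsx : s * x = 0 := hd _ (s * y) <| by
    simp only [map_mul]
    linear_combination d s * hsxy
  exact (hp.isPrime.mem_or_mem_of_mul_eq_zero hsx).resolve_left hs

end MinimalPrimes

theorem eq_zero_of_mul_map_add_mul_map_eq_zero_of_pos {R M : Type*}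
    [NonUnitalNonAssocSemiring R] [AddCommMonoid M] [PartialOrder M] [IsOrderedAddMonoid M]
    (T : R →+ M) {d : R → R} (hT : ∀ x, x ≠ 0 → 0 < T (x * d x)) {x y : R}
    (hxy : x * d x + y * d y = 0) : x = 0 := by
  by_contra hx
  have hy : 0 ≤ T (y * d y) := by
    rcases eq_or_ne y 0 with rfl | hy
    · simp
    · exact (hT y hy).le
  exact (add_pos_of_pos_of_nonneg (hT x hx) hy).ne' (by rw [← map_add, hxy, map_zero])

section ComplexPoints

open ComplexConjugate

variable {A : Type*} [CommRing A] [Algebra ℝ A] {d : A →ₐ[ℝ] A} {ρ : A →ₐ[ℝ] ℂ}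

theorem map_eq_or_eq_conj_of_ker_le_comap (h : RingHom.ker ρ ≤ (RingHom.ker ρ).comap d) (x : A) :
    ρ (d x) = ρ x ∨ ρ (d x) = conj (ρ x) := by
  let q : A := x ^ 2 - (2 * (ρ x).re) • x + algebraMap ℝ A (Complex.normSq (ρ x))
  have map_q (σ : A →ₐ[ℝ] ℂ) : σ q = (σ x - ρ x) * (σ x - conj (ρ x)) := by
    simp only [q, map_add, map_sub, map_pow, map_smul, AlgHom.commutes, Complex.real_smul,
      Complex.coe_algebraMap, ← Complex.mul_conj, ← Complex.add_conj]
    ring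
  have ρ_q : ρ q = 0 := by rw [map_q, sub_self, zero_mul]
  have ρ_dq : (ρ.comp d) q = 0 := h ρ_q
  simpa only [map_q, mul_eq_zero, sub_eq_zero, AlgHom.comp_apply] using ρ_dq

theorem conj_map_eq_self_of_map_eq
    (h : ∀ a b, ρ (a * d a + b * d b) = 0 → ρ a = 0) {x : A} (hx : ρ (d x) = ρ x) :
    conj (ρ x) = ρ x := by
  let n : A := x - algebraMap ℝ A (ρ x).re
  let v : A := algebraMap ℝ A (ρ x).im
  have ρ_n : ρ n = (ρ x).im * Complex.I := by
    simp only [n, map_sub, AlgHom.commutes, Complex.coe_algebraMap]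
    linear_combination -Complex.re_add_im (ρ x)
  have ρ_dn : ρ (d n) = ρ n := by simp only [n, map_sub, AlgHom.commutes, hx]
  have hn : ρ n = 0 := h n v <| by
    simp only [map_add, map_mul, ρ_dn, ρ_n, v, AlgHom.commutes, Complex.coe_algebraMap]
    linear_combination (ρ x).im ^ 2 * Complex.I_sq
  rw [Complex.conj_eq_iff_im]
  simpa [ρ_n] using hn

theorem algHom_involution_conj_general (hd : ∀ x y, x * d x + y * d y = 0 → x = 0)
    (hρ : RingHom.ker ρ ∈ minimalPrimes A) (x : A) : ρ (d x) = conj (ρ x) := by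
  have hker : (RingHom.ker ρ).comap (d : A →+* A) = RingHom.ker ρ :=
    comap_eq_of_mem_minimalPrimes (fun x hx ↦ hd x 0 (by simpa using hx)) hρ
  rcases map_eq_or_eq_conj_of_ker_le_comap hker.ge x with hx | hx
  · have hdef (a b : A) (hab : ρ (a * d a + b * d b) = 0) : ρ a = 0 :=
      mem_of_mul_map_add_mul_map_mem (d := (d : A →+* A)) hd hρ hab
    rw [hx, conj_map_eq_self_of_map_eq hdef hx]
  · exact hx

end ComplexPoints

/-- Let `A` be a finite-dimensional commutative `ℝ`-algebra with an `ℝ`-algebra involution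
`d` such that `Tr(x·d x) > 0` for all `x ≠ 0` (trace of left multiplication).  Then every
`ℝ`-algebra homomorphism `ρ : A → ℂ` intertwines `d` with complex conjugation. -/
theorem algHom_involution_conj (A : Type*) [CommRing A] [Algebra ℝ A]
    [FiniteDimensional ℝ A] (d : A →ₐ[ℝ] A)
    (hd : ∀ x, d (d x) = x)
    (hpos : ∀ x : A, x ≠ 0 →
      0 < LinearMap.trace ℝ A (LinearMap.mulLeft ℝ (x * d x)))
    (ρ : A →ₐ[ℝ] ℂ) (x : A) :
    ρ (d x) = starRingEnd ℂ (ρ x) := by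
  have : IsArtinianRing A := .of_finite ℝ A
  have : (RingHom.ker ρ).IsPrime := RingHom.ker_isPrime ρ
  exact algHom_involution_conj_general
    (fun _ _ ↦ eq_zero_of_mul_map_add_mul_map_eq_zero_of_pos (Algebra.trace ℝ A : A →+ ℝ) hpos)
    (IsArtinianRing.mem_minimalPrimes bot_le) x
end

section
/- Let K ⊆ L be an extension of fields, let U and U′ be finite-dimensional L-vector spaces, and let b : U × U′ → L be an L-bilinear map. Let M ⊆ U and M′ ⊆ U′ be K-subspaces such that b(m, m′) lies in K for all m ∈ M and m′ ∈ M′, and such that M′ spans U′ over L. Then the quotient K-vector space M / {m ∈ M : b(m, m′) = 0 for all m′ ∈ M′} is finite-dimensional over K, of dimension at most dim_L U′. -/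
/-- Given a bilinear pairing `b : U × U' → L` and `K`-subspaces `M ⊆ U`, `M' ⊆ U'`, the
`K`-subspace of `M` consisting of those `m` pairing to zero with every element of `M'`. -/
def leftKernel (K L : Type*) [Field K] [Field L] [Algebra K L]
    (U U' : Type*) [AddCommGroup U] [Module L U] [AddCommGroup U'] [Module L U']
    [Module K U] [IsScalarTower K L U] [Module K U']
    (b : U →ₗ[L] U' →ₗ[L] L) (M : Submodule K U) (M' : Submodule K U') :
    Submodule K M where
  carrier := {m | ∀ m' ∈ M', b m.1 m' = 0}
  add_mem' := by
    intro x y hx hy m' hm'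
    simp only [Submodule.coe_add, map_add, LinearMap.add_apply, hx m' hm', hy m' hm',
      add_zero]
  zero_mem' := by
    intro m' hm'
    simp
  smul_mem' := by
    intro c x hx m' hm'
    have h1 : ((c • x : M) : U) = algebraMap K L c • (x : U) := by
      rw [Submodule.coe_smul_of_tower, algebraMap_smul]
    rw [h1, map_smul, LinearMap.smul_apply, hx m' hm', smul_zero]

/-!
An element of `M` pairs to zero with `M'` exactly when it pairs to zero with a finite `L`-basis
`v₁, …, vₙ` of the `L`-span of `M'` chosen inside `M'`. Hence `m ↦ (b m v₁, …, b m vₙ)` embeds the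
quotient `K`-linearly into `Lⁿ`, and rationality of the pairing places its image in `Kⁿ`.
-/

section QuotientKer

variable {R V W P : Type*} [Ring R] [AddCommGroup V] [Module R V] [AddCommGroup W] [Module R W]
  [AddCommGroup P] [Module R P] {f : V →ₗ[R] W} {g : P →ₗ[R] W}

theorem finite_quotient_ker_of_range_le [IsNoetherian R P] (h : f.range ≤ g.range) :
    Module.Finite R (V ⧸ f.ker) :=
  have : IsNoetherian R f.range := isNoetherian_of_le h
  Module.Finite.equiv f.quotKerEquivRange.symm

theorem finrank_quotient_ker_le_of_range_le [StrongRankCondition R] [Module.Finite R P]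
    (h : f.range ≤ g.range) : Module.finrank R (V ⧸ f.ker) ≤ Module.finrank R P :=
  calc
    Module.finrank R (V ⧸ f.ker) = Module.finrank R f.range := f.quotKerEquivRange.finrank_eq
    _ ≤ Module.finrank R g.range := Submodule.finrank_mono h
    _ ≤ Module.finrank R P := g.finrank_range_le

end QuotientKer

section PairingVector

variable {R E F G ι : Type*} [CommSemiring R] [AddCommMonoid E] [Module R E] [AddCommMonoid F]
  [Module R F] [AddCommMonoid G] [Module R G]

/-- The coordinate map `x ↦ (b x (v i))ᵢ` obtained by pairing against a family `v` of vectors in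
the second variable of `b`. -/
def pairingVector (b : E →ₗ[R] F →ₗ[R] G) (v : ι → F) : E →ₗ[R] ι → G :=
  LinearMap.pi fun i => b.flip (v i)

@[simp]
theorem pairingVector_apply (b : E →ₗ[R] F →ₗ[R] G) (v : ι → F) (x : E) (i : ι) :
    pairingVector b v x i = b x (v i) :=
  rfl

theorem pairingVector_eq_zero_iff_span_le_ker (b : E →ₗ[R] F →ₗ[R] G) (v : ι → F) (x : E) :
    pairingVector b v x = 0 ↔ Submodule.span R (Set.range v) ≤ (b x).ker := by
  simp [funext_iff, Submodule.span_le, Set.range_subset_iff]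

end PairingVector

theorem range_le_range_compLeft {R V W P ι : Type*} [Semiring R] [AddCommMonoid V] [Module R V]
    [AddCommMonoid W] [Module R W] [AddCommMonoid P] [Module R P] {f : V →ₗ[R] ι → W}
    {g : P →ₗ[R] W} (h : ∀ x i, f x i ∈ g.range) : f.range ≤ (g.compLeft ι).range := by
  rintro _ ⟨x, rfl⟩
  choose c hc using h x
  exact ⟨c, funext hc⟩

section LeftKernel

variable {K L U U' : Type*} [Field K] [Field L] [Algebra K L] [AddCommGroup U] [Module L U]
  [AddCommGroup U'] [Module L U'] [Module K U] [IsScalarTower K L U] [Module K U']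
  (b : U →ₗ[L] U' →ₗ[L] L) (M : Submodule K U) (M' : Submodule K U')

theorem mem_leftKernel_iff_span_le_ker (m : M) :
    m ∈ leftKernel K L U U' b M M' ↔ Submodule.span L (M' : Set U') ≤ (b m).ker := by
  rw [Submodule.span_le]
  rfl

theorem leftKernel_eq_ker_pairingVector {ι : Type*} {v : ι → U'}
    (hv : Submodule.span L (Set.range v) = Submodule.span L (M' : Set U')) :
    leftKernel K L U U' b M M' =
      ((pairingVector b v).restrictScalars K ∘ₗ M.subtype).ker := by
  ext m
  rw [mem_leftKernel_iff_span_le_ker, ← hv, ← pairingVector_eq_zero_iff_span_le_ker]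
  rfl

end LeftKernel

theorem quotient_finiteDimensional_of_pairing_general (K L : Type*) [Field K] [Field L]
    [Algebra K L] (U U' : Type*) [AddCommGroup U] [Module L U] [AddCommGroup U']
    [Module L U'] [Module K U] [IsScalarTower K L U] [Module K U']
    (b : U →ₗ[L] U' →ₗ[L] L) (M : Submodule K U) (M' : Submodule K U')
    [FiniteDimensional L (Submodule.span L (M' : Set U'))]
    (hK : ∀ m ∈ M, ∀ m' ∈ M', b m m' ∈ (algebraMap K L).range) :
    FiniteDimensional K (M ⧸ leftKernel K L U U' b M M') ∧
      Module.finrank K (M ⧸ leftKernel K L U U' b M M') ≤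
        Module.finrank L (Submodule.span L (M' : Set U')) := by
  obtain ⟨v, hvM', hvspan, -⟩ := Submodule.exists_fun_fin_finrank_span_eq L (M' : Set U')
  have hrange : ((pairingVector b v).restrictScalars K ∘ₗ M.subtype).range ≤
      ((Algebra.linearMap K L).compLeft (Fin _)).range :=
    range_le_range_compLeft fun m i => hK m m.2 (v i) (hvM' i)
  rw [leftKernel_eq_ker_pairingVector b M M' hvspan]
  refine ⟨finite_quotient_ker_of_range_le hrange, ?_⟩
  simpa only [Module.finrank_fin_fun] using finrank_quotient_ker_le_of_range_le hrange

/-- If `b : U × U' → L` is `L`-bilinear, `M ⊆ U` and `M' ⊆ U'` are `K`-subspaces pairing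
into `K`, and `M'` spans `U'` over `L`, then `M` modulo the left kernel of the pairing with
`M'` is finite-dimensional over `K` of dimension at most `dim_L U'`. -/
theorem quotient_finiteDimensional_of_pairing (K L : Type*) [Field K] [Field L]
    [Algebra K L] (U U' : Type*) [AddCommGroup U] [Module L U] [AddCommGroup U']
    [Module L U'] [FiniteDimensional L U] [FiniteDimensional L U']
    [Module K U] [IsScalarTower K L U] [Module K U'] [IsScalarTower K L U']
    (b : U →ₗ[L] U' →ₗ[L] L) (M : Submodule K U) (M' : Submodule K U')
    (hK : ∀ m ∈ M, ∀ m' ∈ M', b m m' ∈ (algebraMap K L).range)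
    (hspan : Submodule.span L (M' : Set U') = ⊤) :
    FiniteDimensional K (M ⧸ leftKernel K L U U' b M M') ∧
      Module.finrank K (M ⧸ leftKernel K L U U' b M M') ≤ Module.finrank L U' := by
  obtain ⟨hfin, hle⟩ := quotient_finiteDimensional_of_pairing_general K L U U' b M M' hK
  exact ⟨hfin, hle.trans (Submodule.finrank_le _)⟩
end

section
/- Let K ⊆ L be an extension of fields, let U and U′ be finite-dimensional L-vector spaces, and let b : U × U′ → L be an L-bilinear map. Let M ⊆ U and M′ ⊆ U′ be K-subspaces such that b(m, m′) lies in K for all m ∈ M and m′ ∈ M′, such that M spans U over L and M′ spans U′ over L. Let N = M / {m ∈ M : b(m, m′) = 0 for all m′ ∈ M′} and let Ū = U / {u ∈ U : b(u, u′) = 0 for all u′ ∈ U′}. Then the natural L-linear map L ⊗_K N → Ū induced by the inclusion M ⊆ U is an isomorphism. -/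
open TensorProduct

/-! Surjectivity holds because `M` spans `U`. For injectivity, every functional `b(·, m')` descends
to a `K`-valued functional on `N = M ⧸ leftKernel`, and together these separate the points of `N`.
If `v i : X → K`, for `i` in a finite set `s`, are linearly independent, then their columns
`i ↦ v i x` span `s → K`; hence a linear relation `∑ i ∈ s, v i x • a i = 0` valid for all `x`
forces every `a i` to vanish, even when the `a i` lie in an arbitrary `K`-space such as `L`. Applied
to a basis of `N`, this shows that the functionals still separate the points of `L ⊗[K] N`. -/

section Separation

variable {K A N X : Type*} [Field K] [AddCommGroup N] [Module K N]

theorem eq_zero_of_linearIndependent_of_forall_sum_smul_eq_zero [AddCommMonoid A] [Module K A]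
    {ι : Type*} {v : ι → X → K} (hv : LinearIndependent K v) {s : Finset ι} {a : ι → A}
    (ha : ∀ x, ∑ i ∈ s, v i x • a i = 0) : ∀ i ∈ s, a i = 0 := by
  classical
  have hcolumns : Submodule.span K (Set.range (flip fun i : s ↦ v i)) = ⊤ :=
    span_flip_eq_top_iff_linearIndependent.mpr (hv.comp _ Subtype.val_injective)
  have hcomb : Fintype.linearCombination K (fun i : s ↦ a i) = 0 :=
    LinearMap.ext_on_range hcolumns fun x ↦
      (Finset.sum_coe_sort s fun i ↦ v i x • a i).trans (ha x)
  intro i hi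
  simpa using LinearMap.congr_fun hcomb (Pi.single ⟨i, hi⟩ 1)

theorem eq_zero_of_forall_lTensor_eq_zero [AddCommMonoid A] [Module K A]
    {g : X → Module.Dual K N} (hg : ∀ n, (∀ x, g x n = 0) → n = 0) {z : A ⊗[K] N}
    (hz : ∀ x, (g x).lTensor A z = 0) : z = 0 := by
  let B := Module.Basis.ofVectorSpace K N
  obtain ⟨c, rfl⟩ := TensorProduct.eq_repr_basis_right B z
  have hindep : LinearIndependent K fun i x ↦ g x (B i) :=
    B.linearIndependent.map' (LinearMap.pi g) <| LinearMap.ker_eq_bot'.mpr fun n hn ↦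
      hg n (congr_fun hn)
  have hcoeff : ∀ i ∈ c.support, c i = 0 :=
    eq_zero_of_linearIndependent_of_forall_sum_smul_eq_zero hindep fun x ↦ by
      simpa [Finsupp.sum] using congrArg (TensorProduct.rid K A) (hz x)
  exact Finset.sum_eq_zero fun i hi ↦ by simp only [hcoeff i hi, zero_tmul]

theorem liftBaseChange_injective_of_separating {L W : Type*} [CommRing L] [Algebra K L]
    [AddCommGroup W] [Module K W] [Module L W] [IsScalarTower K L W] (f : N →ₗ[K] W)
    {g : X → Module.Dual K N} (hg : ∀ n, (∀ x, g x n = 0) → n = 0)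
    (ψ : X → Module.Dual L W) (hψ : ∀ x n, ψ x (f n) = algebraMap K L (g x n)) :
    Function.Injective (f.liftBaseChange L) := by
  refine (injective_iff_map_eq_zero _).mpr fun z hz ↦
    eq_zero_of_forall_lTensor_eq_zero hg fun x ↦ ?_
  have hcomp : ψ x ∘ₗ f.liftBaseChange L = Module.Dual.baseChange L (g x) := by
    ext n
    simp [hψ, Algebra.algebraMap_eq_smul_one]
  apply (AlgebraTensorModule.rid K L L).injective
  calc AlgebraTensorModule.rid K L L ((g x).lTensor L z)
    _ = ψ x (f.liftBaseChange L z) := (LinearMap.congr_fun hcomp z).symm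
    _ = AlgebraTensorModule.rid K L L 0 := by rw [hz, map_zero, map_zero]

end Separation

namespace leftKernel

variable {K L U U' : Type*} [Field K] [Field L] [Algebra K L]
  [AddCommGroup U] [Module L U] [AddCommGroup U'] [Module L U']
  [Module K U] [IsScalarTower K L U] [Module K U']
  {b : U →ₗ[L] U' →ₗ[L] L} {M : Submodule K U} {M' : Submodule K U'}

theorem apply_eq_zero (hspanM' : Submodule.span L (M' : Set U') = ⊤) {m : M}
    (hm : m ∈ leftKernel K L U U' b M M') : b m = 0 :=
  LinearMap.ext_on hspanM' hm

/-- The natural map `M ⧸ leftKernel → U ⧸ ker b` induced by the inclusion `M ⊆ U`, before base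
change to `L`. It exists because an element pairing to zero with the spanning set `M'` lies in
`ker b`. -/
def quotientMap (hspanM' : Submodule.span L (M' : Set U') = ⊤) :
    (M ⧸ leftKernel K L U U' b M M') →ₗ[K] U ⧸ LinearMap.ker b :=
  (leftKernel K L U U' b M M').liftQ ((LinearMap.ker b).mkQ.restrictScalars K ∘ₗ M.subtype)
    fun _ hm ↦ (Submodule.Quotient.mk_eq_zero _).mpr (apply_eq_zero hspanM' hm)

@[simp]
theorem quotientMap_mk (hspanM' : Submodule.span L (M' : Set U') = ⊤) (m : M) :
    quotientMap (b := b) hspanM' (Submodule.Quotient.mk m) = Submodule.Quotient.mk (m : U) :=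
  rfl

theorem span_range_quotientMap (hspanM : Submodule.span L (M : Set U) = ⊤)
    (hspanM' : Submodule.span L (M' : Set U') = ⊤) :
    Submodule.span L (Set.range (quotientMap (b := b) (M := M) hspanM')) = ⊤ := by
  have hM : Submodule.span L (M : Set U) ≤ (Submodule.span L (Set.range
      (quotientMap (b := b) (M := M) hspanM'))).comap (LinearMap.ker b).mkQ :=
    Submodule.span_le.mpr fun m hm ↦
      Submodule.subset_span ⟨Submodule.Quotient.mk ⟨m, hm⟩, quotientMap_mk hspanM' ⟨m, hm⟩⟩
  rwa [hspanM, ← Submodule.map_le_iff_le_comap, Submodule.map_top, Submodule.range_mkQ,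
    top_le_iff] at hM

/-- The functional `b(·, m')` on `M ⧸ leftKernel`, with values in `K` rather than `L`. These
functionals, for varying `m'`, separate the points of the quotient. -/
noncomputable def toDual (hK : ∀ m ∈ M, ∀ m' ∈ M', b m m' ∈ (algebraMap K L).range)
    (m' : M') : Module.Dual K (M ⧸ leftKernel K L U U' b M M') :=
  (leftKernel K L U U' b M M').liftQ
    (LinearMap.restrictScalarsRange M.subtype (Algebra.linearMap K L) (algebraMap K L).injective
      (b.flip m') fun m ↦ hK m m.2 m' m'.2)
    fun _ hm ↦ (LinearMap.restrictScalarsRange_apply_eq_zero_iff ..).mpr (hm m' m'.2)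

theorem algebraMap_toDual_mk
    (hK : ∀ m ∈ M, ∀ m' ∈ M', b m m' ∈ (algebraMap K L).range) (m' : M') (m : M) :
    algebraMap K L (toDual hK m' (Submodule.Quotient.mk m)) = b m m' :=
  LinearMap.restrictScalarsRange_apply M.subtype (Algebra.linearMap K L)
    (algebraMap K L).injective (b.flip m') _ m

theorem eq_zero_of_forall_toDual_eq_zero
    (hK : ∀ m ∈ M, ∀ m' ∈ M', b m m' ∈ (algebraMap K L).range)
    (n : M ⧸ leftKernel K L U U' b M M') (hn : ∀ m', toDual hK m' n = 0) : n = 0 := by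
  obtain ⟨m, rfl⟩ := Submodule.Quotient.mk_surjective _ n
  refine (Submodule.Quotient.mk_eq_zero _).mpr fun m' hm' ↦ ?_
  rw [← algebraMap_toDual_mk hK ⟨m', hm'⟩, hn, map_zero]

theorem liftBaseChange_quotientMap_injective
    (hK : ∀ m ∈ M, ∀ m' ∈ M', b m m' ∈ (algebraMap K L).range)
    (hspanM' : Submodule.span L (M' : Set U') = ⊤) :
    Function.Injective ((quotientMap (b := b) (M := M) hspanM').liftBaseChange L) := by
  refine liftBaseChange_injective_of_separating _ (eq_zero_of_forall_toDual_eq_zero hK)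
    (fun m' ↦ ((LinearMap.ker b).liftQ b le_rfl).flip (m' : U')) fun m' n ↦ ?_
  obtain ⟨m, rfl⟩ := Submodule.Quotient.mk_surjective _ n
  exact (algebraMap_toDual_mk hK m' m).symm

theorem liftBaseChange_quotientMap_surjective (hspanM : Submodule.span L (M : Set U) = ⊤)
    (hspanM' : Submodule.span L (M' : Set U') = ⊤) :
    Function.Surjective ((quotientMap (b := b) (M := M) hspanM').liftBaseChange L) := by
  rw [← LinearMap.range_eq_top, LinearMap.range_liftBaseChange, LinearMap.coe_range,
    span_range_quotientMap hspanM hspanM']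

end leftKernel

theorem baseChange_quotient_iso_general (K L : Type*) [Field K] [Field L]
    [Algebra K L] (U U' : Type*) [AddCommGroup U] [Module L U] [AddCommGroup U']
    [Module L U'] [Module K U] [IsScalarTower K L U] [Module K U']
    (b : U →ₗ[L] U' →ₗ[L] L) (M : Submodule K U) (M' : Submodule K U')
    (hK : ∀ m ∈ M, ∀ m' ∈ M', b m m' ∈ (algebraMap K L).range)
    (hspanM : Submodule.span L (M : Set U) = ⊤)
    (hspanM' : Submodule.span L (M' : Set U') = ⊤) :
    ∃ e : (L ⊗[K] (M ⧸ leftKernel K L U U' b M M')) ≃ₗ[L] (U ⧸ LinearMap.ker b),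
      ∀ (a : L) (m : M),
        e (a ⊗ₜ[K] Submodule.Quotient.mk m) = a • Submodule.Quotient.mk (m : U) := by
  have hbij : Function.Bijective
      ((leftKernel.quotientMap (b := b) (M := M) hspanM').liftBaseChange L) :=
    ⟨leftKernel.liftBaseChange_quotientMap_injective hK hspanM',
      leftKernel.liftBaseChange_quotientMap_surjective hspanM hspanM'⟩
  refine ⟨LinearEquiv.ofBijective _ hbij, fun a m ↦ ?_⟩
  rw [LinearEquiv.ofBijective_apply, LinearMap.liftBaseChange_tmul, leftKernel.quotientMap_mk]

/-- Let `b : U × U' → L` be `L`-bilinear, and `M ⊆ U`, `M' ⊆ U'` be `K`-subspaces pairing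
into `K` which span `U`, `U'` over `L`.  Let `N` be `M` modulo the elements pairing to zero
with all of `M'`, and `Ū` be `U` modulo the left kernel of `b`.  Then the natural `L`-linear
map `L ⊗[K] N → Ū` induced by the inclusion `M ⊆ U` is an isomorphism. -/
theorem baseChange_quotient_iso (K L : Type*) [Field K] [Field L]
    [Algebra K L] (U U' : Type*) [AddCommGroup U] [Module L U] [AddCommGroup U']
    [Module L U'] [FiniteDimensional L U] [FiniteDimensional L U']
    [Module K U] [IsScalarTower K L U] [Module K U'] [IsScalarTower K L U']
    (b : U →ₗ[L] U' →ₗ[L] L) (M : Submodule K U) (M' : Submodule K U')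
    (hK : ∀ m ∈ M, ∀ m' ∈ M', b m m' ∈ (algebraMap K L).range)
    (hspanM : Submodule.span L (M : Set U) = ⊤)
    (hspanM' : Submodule.span L (M' : Set U') = ⊤) :
    ∃ e : (L ⊗[K] (M ⧸ leftKernel K L U U' b M M')) ≃ₗ[L] (U ⧸ LinearMap.ker b),
      ∀ (a : L) (m : M),
        e (a ⊗ₜ[K] Submodule.Quotient.mk m) = a • Submodule.Quotient.mk (m : U) :=
  baseChange_quotient_iso_general K L U U' b M M' hK hspanM hspanM'
end

section
/- Let p be a prime number and let C be an algebraic closure of the field ℚ_p of p-adic numbers, equipped with the spectral norm ‖·‖ (the unique multiplicative norm extending the p-adic absolute value on ℚ_p). Let P and Q be monic polynomials in ℚ_p[T] of the same degree d. Suppose that for every polynomial F with integer coefficients, the product of ‖F(a)‖ over the roots a of P in C (counted with multiplicity) equals the product of ‖F(b)‖ over the roots b of Q in C (counted with multiplicity). Then P = Q. -/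
/-!
Write `N_P(F) = ∏ ‖F(a)‖` over the roots `a` of `P`, a multiplicative function of `F`. Equality of
`N_P` and `N_Q` on `ℤ[T]` extends to `ℚ[T]` by clearing denominators, and then to `ℚ_p[T]` because
`N_P(F)` depends continuously on the coefficients of `F`. Write `P = D P'` and `Q = D Q'` with `P'`
and `Q'` coprime. The factor `N_D` of `N_P = N_D N_{P'}` can be cancelled even where it vanishes,
since adding a small constant to `F` makes it nonzero. If `P'` had a root, then
`0 = N_{P'}(P') = N_{Q'}(P')` would give it a common root with `Q'`; hence `P'`, and likewise `Q'`,
is constant, and the monic polynomials `P` and `Q` are both proportional to `D`.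
-/

open Polynomial

section NormProd

variable {A B L : Type*} [NormedField L]

/-- The product `∏ ‖F(a)‖` over the elements `a` of a multiset `s`. When `s` consists of the roots
of a monic polynomial `P`, this is the norm of the resultant of `P` and `F`. The coefficient ring
`A` of `F` is arbitrary, so that integral and `p`-adic `F` are treated alike. -/
noncomputable def normProd [CommSemiring A] [Algebra A L] (s : Multiset L) (F : A[X]) : ℝ :=
  (s.map fun a => ‖aeval a F‖).prod

section CommSemiring

variable [CommSemiring A] [Algebra A L]

lemma normProd_add_left (s t : Multiset L) (F : A[X]) :
    normProd (s + t) F = normProd s F * normProd t F := by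
  simp only [normProd, Multiset.map_add, Multiset.prod_add]

lemma normProd_mul (s : Multiset L) (F G : A[X]) :
    normProd s (F * G) = normProd s F * normProd s G := by
  simp only [normProd, map_mul, norm_mul, Multiset.prod_map_mul]

lemma normProd_eq_zero_iff {s : Multiset L} {F : A[X]} :
    normProd s F = 0 ↔ ∃ a ∈ s, aeval a F = 0 := by
  simp only [normProd, Multiset.prod_eq_zero_iff, Multiset.mem_map, norm_eq_zero]

lemma normProd_map_algebraMap [CommSemiring B] [Algebra A B] [Algebra B L] [IsScalarTower A B L]
    (s : Multiset L) (F : A[X]) : normProd s (F.map (algebraMap A B)) = normProd s F := by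
  simp only [normProd, aeval_map_algebraMap]

lemma continuous_normProd {X : Type*} [TopologicalSpace X] (s : Multiset L) {G : X → A[X]}
    (hG : ∀ a ∈ s, Continuous fun x => aeval a (G x)) : Continuous fun x => normProd s (G x) :=
  continuous_multiset_prod s fun a ha => (hG a ha).norm

end CommSemiring

variable {s t : Multiset L}

lemma normProd_eq_of_isLocalization {R S : Type*} [CommRing R] (M : Submonoid R) [CommRing S]
    [Algebra R S] [IsLocalization M S] [Algebra R L] [Algebra S L] [IsScalarTower R S L]
    (h : ∀ F : R[X], normProd s F = normProd t F) (G : S[X]) : normProd s G = normProd t G := by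
  obtain ⟨b, hb, hbG⟩ := IsLocalization.integerNormalization_spec M G
  have clear_denom (u : Multiset L) :
      normProd u (IsLocalization.integerNormalization M G) = normProd u (C b) * normProd u G := by
    rw [← normProd_map_algebraMap (B := S), hbG, ← normProd_map_algebraMap (B := S) u (C b),
      ← normProd_mul, map_C, ← smul_eq_C_mul, algebraMap_smul]
  have hb_ne : algebraMap R L b ≠ 0 := by
    rw [IsScalarTower.algebraMap_apply R S L]
    exact ((IsLocalization.map_units S ⟨b, hb⟩).map (algebraMap S L)).ne_zero
  have hb_prod : normProd t (C b) ≠ 0 := fun h0 => by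
    obtain ⟨a, -, ha⟩ := normProd_eq_zero_iff.1 h0
    exact hb_ne (by rwa [aeval_C] at ha)
  refine mul_left_cancel₀ hb_prod ?_
  calc normProd t (C b) * normProd s G
      = normProd s (C b) * normProd s G := by rw [h]
    _ = normProd s (IsLocalization.integerNormalization M G) := (clear_denom s).symm
    _ = normProd t (IsLocalization.integerNormalization M G) := h _
    _ = normProd t (C b) * normProd t G := clear_denom t

lemma normProd_eq_of_denseRange {S K : Type*} [CommSemiring S] [NormedField K] [NormedAlgebra K L]
    [Algebra S K] [Algebra S L] [IsScalarTower S K L] (hS : DenseRange (algebraMap S K))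
    (h : ∀ G : S[X], normProd s G = normProd t G) (F : K[X]) : normProd s F = normProd t F := by
  let ofCoeffs (x : Fin (F.natDegree + 1) → K) : K[X] := ∑ i : Fin _, monomial i (x i)
  have hF : ofCoeffs (fun i => F.coeff i) = F :=
    (Finset.sum_range fun i => monomial i (F.coeff i)).symm.trans F.as_sum_range.symm
  have hcont (u : Multiset L) : Continuous fun x => normProd u (ofCoeffs x) := by
    refine continuous_normProd u fun a _ => ?_
    simp only [ofCoeffs, map_sum, aeval_monomial]
    exact continuous_finsetSum _ fun i _ => by fun_prop
  have heq : (fun x => normProd s (ofCoeffs x)) = fun x => normProd t (ofCoeffs x) := by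
    refine (DenseRange.piMap fun _ => hS).equalizer (hcont s) (hcont t) (funext fun y => ?_)
    have hy : ofCoeffs (Pi.map (fun _ => algebraMap S K) y) =
        (∑ i : Fin _, monomial i (y i)).map (algebraMap S K) := by
      simp only [ofCoeffs, Polynomial.map_sum, map_monomial, Pi.map_apply]
    simp only [Function.comp_apply, hy, normProd_map_algebraMap, h]
  simpa only [hF] using congrFun heq fun i => F.coeff i

section NontriviallyNormedField

variable {K : Type*} [NontriviallyNormedField K] [NormedAlgebra K L]

lemma dense_setOf_normProd_add_C_ne_zero (s : Multiset L) (F : K[X]) :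
    Dense {c : K | normProd s (F + C c) ≠ 0} := by
  have hfin : {c : K | normProd s (F + C c) = 0}.Finite := by
    refine ((s.map fun a => -aeval a F).finite_toSet.preimage
      (algebraMap K L).injective.injOn).subset fun c hc => ?_
    obtain ⟨a, ha, hac⟩ := normProd_eq_zero_iff.1 hc
    rw [map_add, aeval_C] at hac
    exact Multiset.mem_map.2 ⟨a, ha, neg_eq_of_add_eq_zero_right hac⟩
  exact (dense_univ.sdiff_finite hfin).mono fun c hc => hc.2

lemma normProd_eq_of_normProd_add_left_eq {r : Multiset L}
    (h : ∀ F : K[X], normProd (r + s) F = normProd (r + t) F) (F : K[X]) :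
    normProd s F = normProd t F := by
  have hcont (u : Multiset L) : Continuous fun c : K => normProd u (F + C c) := by
    refine continuous_normProd u fun a _ => ?_
    simp only [map_add, aeval_C]
    fun_prop
  have heq : (fun c : K => normProd s (F + C c)) = fun c => normProd t (F + C c) := by
    refine (hcont s).ext_on (dense_setOf_normProd_add_C_ne_zero r F) (hcont t) fun c hc => ?_
    exact mul_left_cancel₀ hc (by simpa only [normProd_add_left] using h (F + C c))
  simpa only [map_zero, add_zero] using congrFun heq 0

end NontriviallyNormedField

end NormProd

section Roots

variable {K L : Type*} [NormedField L]

lemma isUnit_of_isCoprime_of_normProd_aroots_eq [Field K] [Algebra K L] {P Q : K[X]}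
    (hPQ : IsCoprime P Q) (hP0 : P ≠ 0) (hP : (P.map (algebraMap K L)).Splits)
    (h : normProd (P.aroots L) P = normProd (Q.aroots L) P) : IsUnit P := by
  by_contra hPu
  have hdeg : (P.map (algebraMap K L)).degree ≠ 0 := by
    rwa [degree_map, Ne, ← isUnit_iff_degree_eq_zero]
  obtain ⟨a, ha⟩ := hP.exists_eval_eq_zero hdeg
  rw [eval_map_algebraMap] at ha
  have hzero : normProd (P.aroots L) P = 0 :=
    normProd_eq_zero_iff.2 ⟨a, mem_aroots.2 ⟨hP0, ha⟩, ha⟩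
  obtain ⟨b, hbQ, hbP⟩ := normProd_eq_zero_iff.1 (h ▸ hzero)
  rcases aeval_ne_zero_of_isCoprime hPQ b with hne | hne
  · exact hne hbP
  · exact hne (mem_aroots.1 hbQ).2

variable [NontriviallyNormedField K] [NormedAlgebra K L] {P Q : K[X]}

lemma associated_of_normProd_aroots_eq (hP0 : P ≠ 0) (hQ0 : Q ≠ 0)
    (hP : (P.map (algebraMap K L)).Splits) (hQ : (Q.map (algebraMap K L)).Splits)
    (h : ∀ F : K[X], normProd (P.aroots L) F = normProd (Q.aroots L) F) : Associated P Q := by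
  classical
  let := EuclideanDomain.gcdMonoid K[X]
  obtain ⟨P', Q', hP', hQ', hgcd⟩ := extract_gcd P Q
  set D := gcd P Q
  have hcop : IsCoprime P' Q' := (gcd_isUnit_iff P' Q').1 hgcd
  have hcancel (F : K[X]) : normProd (P'.aroots L) F = normProd (Q'.aroots L) F := by
    refine normProd_eq_of_normProd_add_left_eq (r := D.aroots L) (fun F => ?_) F
    rw [← aroots_mul (hP' ▸ hP0), ← aroots_mul (hQ' ▸ hQ0), ← hP', ← hQ', h]
  have splits_of_dvd {f g : K[X]} (hg0 : g ≠ 0) (hg : (g.map (algebraMap K L)).Splits)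
      (hfg : f ∣ g) : (f.map (algebraMap K L)).Splits :=
    hg.of_dvd (map_ne_zero hg0) (Polynomial.map_dvd _ hfg)
  have hP'u : IsUnit P' :=
    isUnit_of_isCoprime_of_normProd_aroots_eq hcop (right_ne_zero_of_mul (hP' ▸ hP0))
      (splits_of_dvd hP0 hP (Dvd.intro_left D hP'.symm)) (hcancel P')
  have hQ'u : IsUnit Q' :=
    isUnit_of_isCoprime_of_normProd_aroots_eq hcop.symm (right_ne_zero_of_mul (hQ' ▸ hQ0))
      (splits_of_dvd hQ0 hQ (Dvd.intro_left D hQ'.symm)) (hcancel Q').symm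
  rw [hP', hQ']
  exact (associated_mul_unit_left D P' hP'u).trans (associated_mul_unit_right D Q' hQ'u)

theorem monic_poly_eq_of_int_norm_products_general {R S : Type*} [CommRing R] (M : Submonoid R)
    [CommRing S] [Algebra R S] [IsLocalization M S] [Algebra R L] [Algebra S L]
    [IsScalarTower R S L] [Algebra S K] [IsScalarTower S K L] (hS : DenseRange (algebraMap S K))
    (hP : P.Monic) (hQ : Q.Monic)
    (hPs : (P.map (algebraMap K L)).Splits) (hQs : (Q.map (algebraMap K L)).Splits)
    (h : ∀ F : R[X], ((P.aroots L).map fun a => ‖aeval a F‖).prod =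
      ((Q.aroots L).map fun a => ‖aeval a F‖).prod) : P = Q :=
  eq_of_monic_of_associated hP hQ <| associated_of_normProd_aroots_eq hP.ne_zero hQ.ne_zero hPs hQs
    fun F => normProd_eq_of_denseRange hS (normProd_eq_of_isLocalization M h) F

end Roots

/-- Weil's elementary lemma (Weil 1948b, Lemme 12): a monic polynomial over `ℚ_p` is
determined by the values `‖∏ᵢ F(aᵢ)‖` (over its roots `aᵢ`, with multiplicity, in an
algebraic closure `C` of `ℚ_p` equipped with the unique absolute value extending the
`p`-adic one) as `F` runs over the polynomials with integer coefficients. -/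
theorem monic_poly_eq_of_int_norm_products (p : ℕ) [Fact p.Prime]
    (C : Type*) [Field C] [Algebra ℚ_[p] C] [IsAlgClosure ℚ_[p] C]
    (v : AbsoluteValue C ℝ) (hv : ∀ x : ℚ_[p], v (algebraMap ℚ_[p] C x) = ‖x‖)
    (d : ℕ) (P Q : Polynomial ℚ_[p]) (hP : P.Monic) (hQ : Q.Monic)
    (hdP : P.natDegree = d) (hdQ : Q.natDegree = d)
    (h : ∀ F : Polynomial ℤ,
      (((P.map (algebraMap ℚ_[p] C)).roots.map fun a => v (Polynomial.aeval a F)).prod) =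
      (((Q.map (algebraMap ℚ_[p] C)).roots.map fun a => v (Polynomial.aeval a F)).prod)) :
    P = Q := by
  have : IsAlgClosed C := IsAlgClosure.isAlgClosed ℚ_[p]
  have : CharZero C := charZero_of_injective_algebraMap (algebraMap ℚ_[p] C).injective
  let : NormedField C := v.toNormedField
  let : NormedAlgebra ℚ_[p] C :=
    { norm_smul_le := fun x y => by
        rw [Algebra.smul_def, norm_mul]
        exact (congrArg (· * ‖y‖) (hv x)).le }
  exact monic_poly_eq_of_int_norm_products_general (nonZeroDivisors ℤ) (S := ℚ)
    (Padic.denseRange_ratCast p) hP hQ (IsAlgClosed.splits _) (IsAlgClosed.splits _) h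
end
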